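/- arXiv:math/0401246 — 6 statements merged into one kernel-verified Lean document; each statement's English description precedes it below -/
import Mathlib

section
/- (Nichols–Zoeller divisibility for Hopf quotients) Let k be a field, let A and B be finite-dimensional Hopf algebras over k, and let f : A → B be a surjective bialgebra homomorphism (so B is a quotient of A by a Hopf ideal). Then dim_k B divides dim_k A. -/
/-!
The functionals on `B` form an algebra `R = B*` under convolution, and `H = A*` is an `R`-module
along the dual of `f`. The proof shows that some power `H^n` is a free `R`-module `R^t`, and reads
off the divisibility from it; neither Krull–Schmidt nor integrals nor bijectivity of the antipode
are needed.

Choose a simple `R`-module `V` maximizing `dim Hom_R(H, V) / dim V`, and put `t = dim Hom_R(H, V)`,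
`n = dim V`. For every simple `R`-module `U` this gives
`dim Hom_R(H^n, U) ≤ t * dim U = dim Hom_R(R^t, U)`, so that there is a surjection
`π : R^t → H^n` (`exists_extremal_surjective`).

Let `W = Hom_k(A, V)` with the action of `R` twisted by translation of functionals (`Twist`). It is
a faithful `R`-module since `f` is surjective (`Twist.faithful`), and `Hom_k(A, Hom_R(H, V))` embeds
into `Hom_R(H, W)` by means of the antipode (`Twist.homMap_injective`). Hence
`n * dim Hom_R(H, W) ≥ n * dim A * t = t * dim W`, so the injection
`Hom_R(H^n, W) → Hom_R(R^t, W)` induced by `π` is an isomorphism by dimensions. Thus all maps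
`R^t → W` vanish on `ker π`, and as `W` is faithful, `π` is an isomorphism
(`injective_of_extremal`).

Comparing dimensions in `H^n ≃ R^t` gives `n * dim A = t * dim B`, while comparing the maps to the
trivial module `k` gives `n * dim Hom_R(H, k) = t`. Therefore `dim A = dim B * dim Hom_R(H, k)`.
-/

/-! ### Generators of modules over a finite-dimensional algebra -/

section ModuleTheory

variable {k R : Type*} [Field k] [Ring R] [Algebra k R]

/-- The `R`-linear maps sit inside the finite-dimensional space of `k`-linear maps. -/
lemma finite_hom (M V : Type*) [AddCommGroup M] [Module k M] [Module R M] [IsScalarTower k R M]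
    [Module.Finite k M] [AddCommGroup V] [Module k V] [Module R V] [IsScalarTower k R V]
    [Module.Finite k V] : Module.Finite k (M →ₗ[R] V) :=
  Module.Finite.of_injective (LinearMap.restrictScalarsₗ k R M V k)
    (LinearMap.restrictScalars_injective k)

lemma finrank_hom_pi (n : ℕ) (M V : Type*) [AddCommGroup M] [Module k M] [Module R M]
    [IsScalarTower k R M] [Module.Finite k M] [AddCommGroup V] [Module k V] [Module R V]
    [IsScalarTower k R V] [Module.Finite k V] :
    Module.finrank k ((Fin n → M) →ₗ[R] V) = n * Module.finrank k (M →ₗ[R] V) := by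
  have := finite_hom (k := k) (R := R) M V
  rw [← (LinearMap.lsum R (fun _ : Fin n => M) k (M := V)).finrank_eq, Module.finrank_pi_fintype]
  simp

lemma finrank_hom_free [Module.Finite k R] (n : ℕ) (V : Type*) [AddCommGroup V] [Module k V]
    [Module R V] [IsScalarTower k R V] [Module.Finite k V] :
    Module.finrank k ((Fin n → R) →ₗ[R] V) = n * Module.finrank k V := by
  rw [finrank_hom_pi, (LinearMap.ringLmapEquivSelf R k V).finrank_eq]

/-- A semisimple module `N` is generated by `t` elements as soon as every simple module `V`
satisfies `dim Hom(N, V) ≤ t * dim V = dim Hom(R^t, V)`. A map `φ : R^t → N` with maximal image is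
surjective: otherwise some nonzero `p : N → V` kills the image, so that restriction along `φ`,
`Hom(N, V) → Hom(R^t, V)`, is not injective and hence not surjective; a map `g : R^t → V` which does
not factor through `φ` is nonzero on `ker φ`, and adding `s ∘ g` to `φ`, for `s` a section of `p`,
enlarges the image. -/
lemma exists_surjective_of_isSemisimple [Module.Finite k R] (N : Type*) [AddCommGroup N]
    [Module k N] [Module R N] [IsScalarTower k R N] [Module.Finite k N] [IsSemisimpleModule R N] (t : ℕ)
    (h : ∀ m : Ideal R, m.IsMaximal →
      Module.finrank k (N →ₗ[R] R ⧸ m) ≤ t * Module.finrank k (R ⧸ m)) :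
    ∃ φ : (Fin t → R) →ₗ[R] N, Function.Surjective φ := by
  have : Module.Finite R N := Module.Finite.of_restrictScalars_finite k R N
  have : IsNoetherian R N := isNoetherian_of_tower k inferInstance
  obtain ⟨I, ⟨φ, rfl⟩, hmax⟩ := WellFounded.has_min (wellFounded_gt (α := Submodule R N))
    (Set.range fun φ : (Fin t → R) →ₗ[R] N => LinearMap.range φ) ⟨_, 0, rfl⟩
  refine ⟨φ, LinearMap.range_eq_top.mp ?_⟩
  by_contra hne
  obtain ⟨L, hL, hIL⟩ := (eq_top_or_exists_le_coatom (LinearMap.range φ)).resolve_left hne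
  obtain ⟨m, hm, ⟨e⟩⟩ := isSimpleModule_iff_quot_maximal.mp (isSimpleModule_iff_isCoatom.mpr hL)
  have hsimple : IsSimpleModule R (R ⧸ m) := isSimpleModule_iff_isCoatom.mpr hm.out
  let p : N →ₗ[R] R ⧸ m := e.toLinearMap ∘ₗ L.mkQ
  have hp : Function.Surjective p := e.surjective.comp L.mkQ_surjective
  have hpφ : p ∘ₗ φ = 0 := by
    ext1 x
    ext
    simp [p, (Submodule.Quotient.mk_eq_zero L).mpr (hIL (LinearMap.mem_range_self φ _))]
  obtain ⟨s, hs⟩ := IsSemisimpleModule.lifting_property p hp LinearMap.id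
  have := finite_hom (k := k) (R := R) N (R ⧸ m)
  have := finite_hom (k := k) (R := R) (Fin t → R) (R ⧸ m)
  -- Restriction along `φ` kills `p`, so it is not injective; by dimensions it is not surjective.
  obtain ⟨g, hg⟩ : ∃ g : (Fin t → R) →ₗ[R] R ⧸ m, ∀ ψ : N →ₗ[R] R ⧸ m, ψ ∘ₗ φ ≠ g := by
    by_contra! hsurj
    let c : (N →ₗ[R] R ⧸ m) →ₗ[k] ((Fin t → R) →ₗ[R] R ⧸ m) := LinearMap.lcomp k (R ⧸ m) φ
    have hc : Function.Surjective c := hsurj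
    have hdim : Module.finrank k (N →ₗ[R] R ⧸ m) =
        Module.finrank k ((Fin t → R) →ₗ[R] R ⧸ m) :=
      le_antisymm (by rw [finrank_hom_free]; exact h m hm)
        (LinearMap.finrank_le_finrank_of_surjective hc)
    have hp0 : p = 0 :=
      (LinearMap.injective_iff_surjective_of_finrank_eq_finrank hdim).mpr hc
        (hpφ.trans (LinearMap.zero_comp φ).symm)
    have := IsSimpleModule.nontrivial R (R ⧸ m)
    obtain ⟨v, hv⟩ := exists_ne (0 : R ⧸ m)
    obtain ⟨x, rfl⟩ := hp v
    exact hv (by simp [hp0])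
  obtain ⟨u, hu, hgu⟩ : ∃ u, φ u = 0 ∧ g u ≠ 0 := by
    by_contra! hker
    obtain ⟨ψ, hψ⟩ := IsSemisimpleModule.extension_property (M := N) (LinearMap.range φ).subtype
      (Submodule.injective_subtype _)
      (((LinearMap.ker φ).liftQ g hker) ∘ₗ φ.quotKerEquivRange.symm.toLinearMap)
    refine hg ψ (LinearMap.ext fun x => ?_)
    have hx : φ.quotKerEquivRange.symm ⟨φ x, LinearMap.mem_range_self φ x⟩ =
        (LinearMap.ker φ).mkQ x := by
      rw [LinearEquiv.symm_apply_eq]; rfl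
    have := LinearMap.congr_fun hψ ⟨φ x, LinearMap.mem_range_self φ x⟩
    rwa [LinearMap.comp_apply, LinearMap.comp_apply, LinearEquiv.coe_coe, hx] at this
  have hgK : ∀ v, ∃ x, φ x = 0 ∧ g x = v := by
    have := LinearMap.surjective_of_ne_zero (f := g ∘ₗ (LinearMap.ker φ).subtype)
      fun h0 => hgu (LinearMap.congr_fun h0 ⟨u, hu⟩)
    intro v
    obtain ⟨x, rfl⟩ := this v
    exact ⟨x, x.2, rfl⟩
  refine hmax _ ⟨φ + s ∘ₗ g, rfl⟩ ?_
  have hsmem : ∀ v, s v ∈ LinearMap.range (φ + s ∘ₗ g) := fun v => by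
    obtain ⟨x, hx, rfl⟩ := hgK v
    exact ⟨x, by simp [hx]⟩
  refine lt_of_le_not_ge ?_ fun hle => hgu ?_
  · rintro _ ⟨x, rfl⟩
    simpa using sub_mem (LinearMap.mem_range_self (φ + s ∘ₗ g) x) (hsmem (g x))
  · obtain ⟨x, hx⟩ := hle (hsmem (g u))
    have h1 := LinearMap.congr_fun hs (g u)
    have h2 := LinearMap.congr_fun hpφ x
    rw [LinearMap.comp_apply, ← hx] at h1
    exact h1.symm.trans h2

/-- The criterion of `exists_surjective_of_isSemisimple` holds without semisimplicity: apply it to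
`N` modulo its radical, lift the map along the projection, and conclude by Nakayama, a proper
submodule being contained in a maximal one, which contains the radical. -/
lemma exists_surjective [Module.Finite k R] (N : Type*) [AddCommGroup N] [Module k N] [Module R N]
    [IsScalarTower k R N] [Module.Finite k N] (t : ℕ)
    (h : ∀ m : Ideal R, m.IsMaximal →
      Module.finrank k (N →ₗ[R] R ⧸ m) ≤ t * Module.finrank k (R ⧸ m)) :
    ∃ φ : (Fin t → R) →ₗ[R] N, Function.Surjective φ := by
  have : Module.Finite R N := Module.Finite.of_restrictScalars_finite k R N
  have : IsArtinian R N := isArtinian_of_tower k inferInstance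
  let J := Module.jacobson R N
  have : IsSemisimpleModule R (N ⧸ J) :=
    (IsArtinian.isSemisimpleModule_iff_jacobson R (N ⧸ J)).mpr
      (Module.jacobson_quotient_jacobson R N)
  obtain ⟨φ, hφ⟩ := exists_surjective_of_isSemisimple (k := k) (R := R) (N ⧸ J) t fun m hm => by
    have := finite_hom (k := k) (R := R) N (R ⧸ m)
    refine le_trans ?_ (h m hm)
    exact LinearMap.finrank_le_finrank_of_injective (f := LinearMap.lcomp k (R ⧸ m) J.mkQ)
      (fun a b hab => LinearMap.ext fun x => by
        obtain ⟨y, rfl⟩ := J.mkQ_surjective x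
        exact LinearMap.congr_fun hab y)
  obtain ⟨ψ, hψ⟩ := Module.projective_lifting_property J.mkQ φ J.mkQ_surjective
  refine ⟨ψ, LinearMap.range_eq_top.mp ?_⟩
  by_contra hne
  obtain ⟨L, hL, hIL⟩ := (eq_top_or_exists_le_coatom (LinearMap.range ψ)).resolve_left hne
  refine hL.1 (eq_top_iff.mpr fun x _ => ?_)
  obtain ⟨y, hy⟩ := hφ (J.mkQ x)
  have hJ : J ≤ L := sInf_le hL
  have : x - ψ y ∈ J := by
    rw [← J.ker_mkQ, LinearMap.mem_ker, map_sub, ← hy, ← hψ]; simp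
  simpa using add_mem (hJ this) (hIL (LinearMap.mem_range_self ψ y))

/-- Among the simple modules `V = R ⧸ m`, choose one for which the ratio `dim Hom(M, V) / dim V` is
maximal, and call its numerator `t` and its denominator `n`. The generation criterion then gives a
surjection from `R^t` onto `M^n`. -/
lemma exists_extremal_surjective [Module.Finite k R] [Nontrivial R] (M : Type*)
    [AddCommGroup M] [Module k M] [Module R M] [IsScalarTower k R M] [Module.Finite k M] :
    ∃ m : Ideal R, m.IsMaximal ∧
      ∃ π : (Fin (Module.finrank k (M →ₗ[R] R ⧸ m)) → R) →ₗ[R]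
        (Fin (Module.finrank k (R ⧸ m)) → M), Function.Surjective π := by
  let q : Ideal R → ℚ := fun m =>
    (Module.finrank k (M →ₗ[R] R ⧸ m) : ℚ) / Module.finrank k (R ⧸ m)
  -- Numerator and denominator are bounded, so the ratio takes finitely many values.
  have hfin : (Set.image q {m | m.IsMaximal}).Finite := by
    refine (Set.Finite.image2 (fun a b : ℕ => (a / b : ℚ))
      (Set.finite_Iic (Module.finrank k M * Module.finrank k R))
      (Set.finite_Iic (Module.finrank k R))).subset ?_
    rintro _ ⟨m, -, rfl⟩
    have hle : Module.finrank k (R ⧸ m) ≤ Module.finrank k R :=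
      LinearMap.finrank_le_finrank_of_surjective (f := (m.mkQ).restrictScalars k) m.mkQ_surjective
    refine ⟨_, ?_, _, hle, rfl⟩
    calc Module.finrank k (M →ₗ[R] R ⧸ m) ≤ Module.finrank k (M →ₗ[k] R ⧸ m) :=
          LinearMap.finrank_le_finrank_of_injective
            (f := LinearMap.restrictScalarsₗ k R M (R ⧸ m) k)
            (LinearMap.restrictScalars_injective k)
      _ = Module.finrank k M * Module.finrank k (R ⧸ m) := Module.finrank_linearMap ..
      _ ≤ _ := Nat.mul_le_mul_left _ hle
  obtain ⟨m₀, hm₀⟩ := Ideal.exists_maximal R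
  obtain ⟨_, ⟨m, hm, rfl⟩, hmax⟩ := hfin.exists_le_maximal ⟨m₀, hm₀, rfl⟩ |>.imp fun _ h => h.2
  refine ⟨m, hm, exists_surjective (k := k) _ _ fun m' hm' => ?_⟩
  have pos : ∀ m : Ideal R, m.IsMaximal → (0 : ℚ) < Module.finrank k (R ⧸ m) := fun m hm => by
    have : Nontrivial (R ⧸ m) := Submodule.Quotient.nontrivial_iff.mpr hm.ne_top
    exact_mod_cast Module.finrank_pos
  have hle : q m' ≤ q m := le_of_not_gt fun hlt => hlt.not_ge (hmax ⟨m', hm', rfl⟩ hlt.le)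
  rw [finrank_hom_pi]
  simp only [q] at hle
  rw [div_le_div_iff₀ (pos m' hm') (pos m hm)] at hle
  rw [mul_comm]
  exact_mod_cast hle

/-- If `W` is faithful and `Hom(M^n, W)` is at least as large as `Hom(R^t, W)`, then a surjection
`π : R^t → M^n` is injective: precomposition with `π` is injective on maps to `W`, hence bijective,
so every map `R^t → W` vanishes on `ker π`. -/
lemma injective_of_extremal [Module.Finite k R] {M W : Type*} [AddCommGroup M]
    [Module k M] [Module R M] [IsScalarTower k R M] [Module.Finite k M]
    [AddCommGroup W] [Module k W] [Module R W] [IsScalarTower k R W] [Module.Finite k W]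
    {t n : ℕ} (π : (Fin t → R) →ₗ[R] (Fin n → M)) (hπ : Function.Surjective π)
    (hW : t * Module.finrank k W ≤ n * Module.finrank k (M →ₗ[R] W))
    (hfaith : ∀ r : R, (∀ w : W, r • w = 0) → r = 0) : Function.Injective π := by
  have := finite_hom (k := k) (R := R) (Fin n → M) W
  have := finite_hom (k := k) (R := R) (Fin t → R) W
  let c : ((Fin n → M) →ₗ[R] W) →ₗ[k] ((Fin t → R) →ₗ[R] W) := LinearMap.lcomp k W π
  have hc : Function.Injective c := fun a b hab => LinearMap.ext fun x => by
    obtain ⟨y, rfl⟩ := hπ x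
    exact LinearMap.congr_fun hab y
  have hdim : Module.finrank k ((Fin n → M) →ₗ[R] W) = Module.finrank k ((Fin t → R) →ₗ[R] W) :=
    le_antisymm (LinearMap.finrank_le_finrank_of_injective hc)
      (by rw [finrank_hom_free, finrank_hom_pi]; exact hW)
  have hsurj := (LinearMap.injective_iff_surjective_of_finrank_eq_finrank hdim).mp hc
  rw [injective_iff_map_eq_zero]
  intro u hu
  ext i
  refine hfaith _ fun w => ?_
  obtain ⟨ψ, hψ⟩ := hsurj (LinearMap.toSpanSingleton R W w ∘ₗ LinearMap.proj i)
  have := LinearMap.congr_fun hψ u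
  simpa [c, hu] using this.symm

end ModuleTheory

/-! ### The dual algebra and its translations -/

section DualAlgebra

open Coalgebra TensorProduct WithConv

variable {k A B : Type*} [Field k] [Ring A] [Ring B] [HopfAlgebra k A] [HopfAlgebra k B]

/-- Coassociativity inside a trilinear map: `∑ T(a₁₁, a₁₂, a₂) = ∑ T(a₁, a₂₁, a₂₂)`. -/
lemma sum_coassoc {V : Type*} [AddCommGroup V] [Module k V] (T : A →ₗ[k] A →ₗ[k] A →ₗ[k] V)
    (a : A) :
    ∑ i ∈ (ℛ k a).index, ∑ j ∈ (ℛ k ((ℛ k a).left i)).index,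
      T ((ℛ k ((ℛ k a).left i)).left j) ((ℛ k ((ℛ k a).left i)).right j) ((ℛ k a).right i) =
    ∑ i ∈ (ℛ k a).index, ∑ j ∈ (ℛ k ((ℛ k a).right i)).index,
      T ((ℛ k a).left i) ((ℛ k ((ℛ k a).right i)).left j)
        ((ℛ k ((ℛ k a).right i)).right j) := by
  have h := congrArg (TensorProduct.lift ((TensorProduct.lift.equiv (.id k) A A V).toLinearMap ∘ₗ T))
    (sum_tmul_tmul_eq (ℛ k a) (fun i => ℛ k ((ℛ k a).left i)) (fun i => ℛ k ((ℛ k a).right i)))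
  simpa [map_sum] using h

lemma sum_smul_counit {ι : Type*} {a : A} (𝓡 : Repr k a ι) :
    ∑ i ∈ 𝓡.index, counit (R := k) (𝓡.right i) • 𝓡.left i = a := by
  have h := congrArg (TensorProduct.rid k A) (sum_tmul_counit_eq 𝓡)
  simpa only [map_sum, TensorProduct.rid_tmul, one_smul] using h

lemma sum_conv_apply {ι : Type*} (I : Finset ι) (u : ι → WithConv (A →ₗ[k] k)) (x : A) :
    (∑ i ∈ I, u i) x = ∑ i ∈ I, u i x := by
  rw [← LinearMap.sum_apply]
  congr 1
  exact map_sum (WithConv.linearEquiv k (A →ₗ[k] k)) u _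

/-- Translation of functionals, `(c ▷ r)(x) = r (c * x)`: a right action of `A` on its dual, which
is `WithConv (A →ₗ[k] k)` with the convolution product. -/
noncomputable def hit : A →ₗ[k] WithConv (A →ₗ[k] k) →ₗ[k] WithConv (A →ₗ[k] k) :=
  LinearMap.mk₂ k (fun c r => toConv (r.ofConv ∘ₗ LinearMap.mulLeft k c))
    (fun a b r => by ext; simp [add_mul])
    (fun c a r => by ext; simp)
    (fun a r s => by ext; simp)
    (fun c a r => by ext; simp)

@[simp]
lemma hit_apply (c : A) (r : WithConv (A →ₗ[k] k)) (x : A) :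
    (hit c r) x = r (c * x) := rfl

lemma hit_hit (c d : A) (r : WithConv (A →ₗ[k] k)) :
    hit c (hit d r) = hit (d * c) r := by
  ext; simp [mul_assoc]

/-- Translation is a measuring: `c ▷ (r * s) = ∑ (c₁ ▷ r) * (c₂ ▷ s)`. -/
lemma hit_mul {ι : Type*} {c : A} (𝓡 : Repr k c ι) (r s : WithConv (A →ₗ[k] k)) :
    hit c (r * s) = ∑ i ∈ 𝓡.index, hit (𝓡.left i) r * hit (𝓡.right i) s := by
  ext x
  rw [sum_conv_apply]
  simp only [(ℛ k x).convMul_apply]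
  rw [hit_apply, LinearMap.convMul_apply, Bialgebra.comul_mul, ← 𝓡.eq, ← (ℛ k x).eq]
  simp [Finset.sum_mul_sum]

lemma hit_one_right (c : A) :
    hit c (1 : WithConv (A →ₗ[k] k)) = counit (R := k) c • 1 := by
  ext; simp

lemma hit_one_left (r : WithConv (A →ₗ[k] k)) : hit 1 r = r := by
  ext; simp

/-- The ring homomorphism `B* → A*` dual to `f`. -/
noncomputable def pull (f : A →ₐc[k] B) : WithConv (B →ₗ[k] k) →+* WithConv (A →ₗ[k] k) where
  toFun r := toConv (r.ofConv ∘ₗ (f : A →ₗc[k] B).toLinearMap)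
  map_one' := by ext; simp
  map_mul' r s := congrArg toConv (LinearMap.convMul_comp_coalgHom_distrib r s (f : A →ₗc[k] B))
  map_zero' := by ext; simp
  map_add' r s := by ext; simp

lemma hit_pull (f : A →ₐc[k] B) (a : A) (r : WithConv (B →ₗ[k] k)) :
    hit a (pull f r) = pull f (hit (f a) r) := by
  ext; simp [pull]

/-- The dual of `A`, as a left module over the dual of `B` along `pull f`. -/
def DualModule (_f : A →ₐc[k] B) : Type _ := WithConv (A →ₗ[k] k)

namespace DualModule

variable (f : A →ₐc[k] B)

noncomputable instance : AddCommGroup (DualModule f) :=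
  inferInstanceAs (AddCommGroup (WithConv (A →ₗ[k] k)))
noncomputable instance : Module k (DualModule f) :=
  inferInstanceAs (Module k (WithConv (A →ₗ[k] k)))
noncomputable instance : Module (WithConv (B →ₗ[k] k)) (DualModule f) :=
  Module.compHom (WithConv (A →ₗ[k] k)) (pull f)

lemma smul_def (r : WithConv (B →ₗ[k] k)) (h : DualModule f) :
    r • h = (show DualModule f from pull f r * (show WithConv (A →ₗ[k] k) from h)) := rfl

instance : IsScalarTower k (WithConv (B →ₗ[k] k)) (DualModule f) where
  smul_assoc c r h := by
    rw [smul_def, smul_def]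
    exact smul_mul_assoc c (pull f r) (h : WithConv (A →ₗ[k] k))

lemma finrank_eq [FiniteDimensional k A] :
    Module.finrank k (DualModule f) = Module.finrank k A :=
  (WithConv.linearEquiv k (A →ₗ[k] k)).finrank_eq.trans Subspace.dual_finrank_eq

instance [FiniteDimensional k A] : Module.Finite k (DualModule f) :=
  Module.Finite.equiv (WithConv.linearEquiv k (A →ₗ[k] k)).symm

end DualModule

/-! ### The twisted module -/

/-- The space `Hom(A, V) = A* ⊗ V` for a `B*`-module `V`, carrying the action
`(r • w)(a) = ∑ (f a₁ ▷ r) • w a₂` of `B*`. -/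
def Twist (_f : A →ₐc[k] B) (V : Type*) [AddCommGroup V] [Module k V] : Type _ := A →ₗ[k] V

namespace Twist

variable (f : A →ₐc[k] B) (V : Type*) [AddCommGroup V] [Module k V]

noncomputable instance : AddCommGroup (Twist f V) := inferInstanceAs (AddCommGroup (A →ₗ[k] V))
noncomputable instance : Module k (Twist f V) := inferInstanceAs (Module k (A →ₗ[k] V))
instance [FiniteDimensional k A] [FiniteDimensional k V] : Module.Finite k (Twist f V) :=
  inferInstanceAs (Module.Finite k (A →ₗ[k] V))

lemma finrank_eq [FiniteDimensional k A] [FiniteDimensional k V] :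
    Module.finrank k (Twist f V) = Module.finrank k A * Module.finrank k V :=
  Module.finrank_linearMap k k A V

variable {V} [Module (WithConv (B →ₗ[k] k)) V] [IsScalarTower k (WithConv (B →ₗ[k] k)) V]

/-- The action `(r • w)(a) = ∑ (f a₁ ▷ r) • w a₂` defining the module structure on `Twist f V`. -/
noncomputable def twistAct (r : WithConv (B →ₗ[k] k)) (w : A →ₗ[k] V) : A →ₗ[k] V :=
  TensorProduct.lift (LinearMap.mk₂ k (fun x y => hit (f x) r • w y)
    (fun a b y => by simp [add_smul])
    (fun c a y => by simp)
    (fun a y z => by simp)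
    (fun c a y => by rw [map_smul, smul_comm])) ∘ₗ comul

variable {f}

lemma twistAct_apply {ι : Type*} {a : A} (𝓡 : Repr k a ι) (r : WithConv (B →ₗ[k] k)) (w : A →ₗ[k] V) :
    twistAct f r w a = ∑ i ∈ 𝓡.index, hit (f (𝓡.left i)) r • w (𝓡.right i) := by
  simp [twistAct, ← 𝓡.eq]

lemma twistAct_mul (r s : WithConv (B →ₗ[k] k)) (w : A →ₗ[k] V) :
    twistAct f (r * s) w = twistAct f r (twistAct f s w) := by
  ext a
  let T : A →ₗ[k] A →ₗ[k] A →ₗ[k] V := LinearMap.mk₂ k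
    (fun x y => Algebra.lsmul k k V (hit (f x) r * hit (f y) s) ∘ₗ w)
    (fun a b y => by ext; simp [add_mul])
    (fun c a y => by ext; simp)
    (fun a y z => by ext; simp [mul_add])
    (fun c a y => by ext; simp)
  have h := sum_coassoc T a
  simp only [T, LinearMap.mk₂_apply, LinearMap.comp_apply, Algebra.lsmul_coe] at h
  rw [twistAct_apply (ℛ k a), twistAct_apply (ℛ k a)]
  calc _ = _ := Finset.sum_congr rfl fun i _ => by
        rw [hit_mul ((ℛ k ((ℛ k a).left i)).induced f), Finset.sum_smul]; rfl
    _ = _ := h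
    _ = _ := Finset.sum_congr rfl fun i _ => by
        rw [twistAct_apply (ℛ k _), Finset.smul_sum]
        simp only [mul_smul]

lemma twistAct_one (w : A →ₗ[k] V) : twistAct f 1 w = w := by
  ext a
  rw [twistAct_apply (ℛ k a)]
  conv_rhs => rw [← sum_counit_smul (ℛ k a)]
  simp [hit_one_right]

lemma twistAct_add (r : WithConv (B →ₗ[k] k)) (v w : A →ₗ[k] V) :
    twistAct f r (v + w) = twistAct f r v + twistAct f r w := by
  ext a
  simp [twistAct_apply (ℛ k a), Finset.sum_add_distrib]

lemma add_twistAct (r s : WithConv (B →ₗ[k] k)) (w : A →ₗ[k] V) :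
    twistAct f (r + s) w = twistAct f r w + twistAct f s w := by
  ext a
  simp [twistAct_apply (ℛ k a), Finset.sum_add_distrib, add_smul]

lemma smul_twistAct (c : k) (r : WithConv (B →ₗ[k] k)) (w : A →ₗ[k] V) :
    twistAct f (c • r) w = c • twistAct f r w := by
  ext a
  simp [twistAct_apply (ℛ k a), Finset.smul_sum]

noncomputable instance : Module (WithConv (B →ₗ[k] k)) (Twist f V) where
  smul r w := twistAct f r w
  one_smul w := twistAct_one w
  mul_smul r s w := twistAct_mul r s w
  smul_zero r := LinearMap.ext fun a => by
    refine (twistAct_apply (ℛ k a) r 0).trans ?_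
    simp only [LinearMap.zero_apply, smul_zero, Finset.sum_const_zero]
    rfl
  smul_add r v w := twistAct_add r v w
  add_smul r s w := add_twistAct r s w
  zero_smul w := by
    have h := smul_twistAct (f := f) 0 0 w
    rw [zero_smul, zero_smul] at h
    exact h

instance : IsScalarTower k (WithConv (B →ₗ[k] k)) (Twist f V) where
  smul_assoc c r w := smul_twistAct c r w

/-- If `r` annihilates `Twist f V`, then, on the elements `a ↦ ε(a) v`, every translate of `r`
annihilates `v`. The left ideal generated by the translates of `r` contains all the scalars `r x`,
so these are zero. -/
lemma faithful [FiniteDimensional k B] (hf : Function.Surjective f) [Nontrivial V]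
    (r : WithConv (B →ₗ[k] k)) (hr : ∀ w : Twist f V, r • w = 0) : r = 0 := by
  obtain ⟨v, hv⟩ := exists_ne (0 : V)
  have hbv : ∀ b : B, hit b r • v = 0 := fun b => by
    obtain ⟨a, rfl⟩ := hf b
    have h : twistAct f r (LinearMap.toSpanSingleton k V v ∘ₗ counit) = 0 := hr _
    have h := LinearMap.congr_fun h a
    rw [twistAct_apply (ℛ k a)] at h
    refine Eq.trans ?_ h
    conv_lhs => rw [← sum_smul_counit (ℛ k a)]
    simp only [map_sum, map_smul, LinearMap.sum_apply, LinearMap.smul_apply, Finset.sum_smul]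
    refine Finset.sum_congr rfl fun i _ => ?_
    rw [smul_assoc, smul_comm]
    simp
  let e := Module.finBasis k B
  -- Evaluated at `z`, this says `ε(z) r(x) = ∑ r(x S(z₁) z₂)`.
  have key : ∀ x, r x • (1 : WithConv (B →ₗ[k] k)) =
      ∑ i, toConv (e.coord i ∘ₗ HopfAlgebra.antipode k) * hit (x * e i) r := fun x => by
    ext z
    rw [sum_conv_apply]
    simp only [(ℛ k z).convMul_apply]
    rw [Finset.sum_comm]
    calc _ = r (x * ∑ j ∈ (ℛ k z).index,
          HopfAlgebra.antipode k ((ℛ k z).left j) * (ℛ k z).right j) := by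
          rw [HopfAlgebra.sum_antipode_mul_eq_smul]
          simp [mul_comm]
      _ = _ := by
          rw [Finset.mul_sum, map_sum]
          refine Finset.sum_congr rfl fun j _ => ?_
          conv_lhs => rw [← e.sum_repr (HopfAlgebra.antipode k ((ℛ k z).left j))]
          simp only [Finset.sum_mul, Finset.mul_sum, map_sum, smul_mul_assoc, mul_smul_comm,
            map_smul]
          simp [mul_assoc]
  ext x
  have h := congrArg (· • v) (key x)
  simp only [Finset.sum_smul, mul_smul, hbv, smul_zero, Finset.sum_const_zero, smul_assoc,
    one_smul] at h
  simpa [hv] using h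

/-- Translation `hit`, seen on the module `DualModule f`. -/
noncomputable def hitH : A →ₗ[k] DualModule f →ₗ[k] DualModule f := hit

lemma hitH_hitH (c d : A) (h : DualModule f) : hitH c (hitH d h) = hitH (d * c) h :=
  hit_hit c d _

lemma hitH_one (h : DualModule f) : hitH 1 h = h := hit_one_left _

lemma hitH_smul {ι : Type*} {a : A} (𝓡 : Repr k a ι) (r : WithConv (B →ₗ[k] k))
    (h : DualModule f) :
    hitH a (r • h) = ∑ i ∈ 𝓡.index, hit (f (𝓡.left i)) r • hitH (𝓡.right i) h := by
  refine (hit_mul 𝓡 (pull f r) _).trans (Finset.sum_congr rfl fun i _ => ?_)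
  rw [hit_pull]
  rfl

/-- The element `a ↦ ∑ θ(a₂)(a₁ ▷ h)` of `Twist f V` attached to a family `θ` of `B*`-linear maps
`A* → V`. -/
noncomputable def homFun (θ : A →ₗ[k] (DualModule f →ₗ[WithConv (B →ₗ[k] k)] V)) (h : DualModule f) :
    Twist f V :=
  TensorProduct.lift (LinearMap.mk₂ k (fun x y => θ y (hitH x h))
    (fun a b y => by simp)
    (fun c a y => by simp)
    (fun a y z => by simp)
    (fun c a y => by simp)) ∘ₗ (comul : A →ₗ[k] A ⊗[k] A)

lemma homFun_apply {ι : Type*} {a : A} (𝓡 : Repr k a ι)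
    (θ : A →ₗ[k] (DualModule f →ₗ[WithConv (B →ₗ[k] k)] V)) (h : DualModule f) :
    (show A →ₗ[k] V from homFun θ h) a =
      ∑ i ∈ 𝓡.index, θ (𝓡.right i) (hitH (𝓡.left i) h) := by
  simp [homFun, ← 𝓡.eq]

/-- The `k`-linear map `Hom(A, Hom_{B*}(A*, V)) → Hom_{B*}(A*, Twist f V)` sending `θ` to
`h ↦ (a ↦ ∑ θ(a₂)(a₁ ▷ h))`. -/
noncomputable def homMap : (A →ₗ[k] (DualModule f →ₗ[WithConv (B →ₗ[k] k)] V)) →ₗ[k]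
    (DualModule f →ₗ[WithConv (B →ₗ[k] k)] Twist f V) where
  toFun θ :=
    { toFun := homFun θ
      map_add' := fun g h => LinearMap.ext fun a => by
        refine (homFun_apply (ℛ k a) _ _).trans ?_
        refine Eq.trans ?_ (congrArg₂ (· + ·) (homFun_apply (ℛ k a) θ g)
          (homFun_apply (ℛ k a) θ h)).symm
        simp [Finset.sum_add_distrib]
      map_smul' := fun r h => LinearMap.ext fun a => by
        let T : A →ₗ[k] A →ₗ[k] A →ₗ[k] V := LinearMap.mk₂ k
          (fun x y => Algebra.lsmul k k V (hit (f x) r) ∘ₗ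
            LinearMap.applyₗ (hitH y h) ∘ₗ
              LinearMap.restrictScalarsₗ k (WithConv (B →ₗ[k] k)) (DualModule f) V k ∘ₗ θ)
          (fun a b y => by ext; simp)
          (fun c a y => by ext; simp)
          (fun a y z => by ext; simp)
          (fun c a y => LinearMap.ext fun z => by
            simpa using smul_comm (hit (f a) r) c (θ z (hitH y h)))
        have key := sum_coassoc T a
        refine (homFun_apply (ℛ k a) _ _).trans ?_
        refine Eq.trans ?_ (key.trans ?_)
        · refine Finset.sum_congr rfl fun i _ => ?_
          rw [hitH_smul (ℛ k _), map_sum]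
          refine Finset.sum_congr rfl fun j _ => ?_
          rw [map_smul]
          rfl
        · refine Eq.trans ?_ (twistAct_apply (ℛ k a) r _).symm
          refine Finset.sum_congr rfl fun i _ => ?_
          refine Eq.trans ?_ (congrArg (hit (f ((ℛ k a).left i)) r • ·)
            (homFun_apply (ℛ k _) θ h)).symm
          simp only [Finset.smul_sum]
          rfl }
  map_add' θ θ' := LinearMap.ext fun h => LinearMap.ext fun a => by
    refine (homFun_apply (ℛ k a) _ _).trans ?_
    refine Eq.trans ?_ (congrArg₂ (· + ·) (homFun_apply (ℛ k a) θ h)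
      (homFun_apply (ℛ k a) θ' h)).symm
    simp [Finset.sum_add_distrib]
  map_smul' c θ := LinearMap.ext fun h => LinearMap.ext fun a => by
    refine (homFun_apply (ℛ k a) _ _).trans ?_
    refine Eq.trans ?_ (congrArg (c • ·) (homFun_apply (ℛ k a) θ h)).symm
    simp [Finset.smul_sum]

/-- The family `θ` is recovered from its image `G` by `θ(a)(h) = ∑ G(S(a₁) ▷ h)(a₂)`. -/
lemma homMap_injective : Function.Injective (homMap (f := f) (V := V)) := by
  rw [injective_iff_map_eq_zero]
  intro θ hθ
  ext a h
  let T : A →ₗ[k] A →ₗ[k] A →ₗ[k] V := LinearMap.mk₂ k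
    (fun x y => LinearMap.applyₗ (hitH (HopfAlgebra.antipode k x * y) h) ∘ₗ
      LinearMap.restrictScalarsₗ k (WithConv (B →ₗ[k] k)) (DualModule f) V k ∘ₗ θ)
    (fun a b y => by ext; simp [add_mul])
    (fun c a y => by ext; simp)
    (fun a y z => by ext; simp [mul_add])
    (fun c a y => by ext; simp)
  have key := sum_coassoc T a
  have hl : ∀ x z : A, ∑ j ∈ (ℛ k x).index, T ((ℛ k x).left j) ((ℛ k x).right j) z =
      counit (R := k) x • θ z h := fun x z => by
    change ∑ j ∈ (ℛ k x).index,
      θ z (hitH (HopfAlgebra.antipode k ((ℛ k x).left j) * (ℛ k x).right j) h) = _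
    rw [← map_sum, ← LinearMap.sum_apply, ← map_sum, HopfAlgebra.sum_antipode_mul_eq_smul,
      map_smul, LinearMap.smul_apply, hitH_one, LinearMap.map_smul_of_tower]
  have hr : ∀ x y : A, ∑ j ∈ (ℛ k y).index, T x ((ℛ k y).left j) ((ℛ k y).right j) = 0 :=
    fun x y => by
      refine Eq.trans ?_ (LinearMap.congr_fun (LinearMap.congr_fun hθ
        (hitH (HopfAlgebra.antipode k x) h)) y)
      refine Eq.trans ?_ (homFun_apply (ℛ k y) θ _).symm
      refine Finset.sum_congr rfl fun j _ => ?_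
      rw [hitH_hitH]
      rfl
  simp only [hl, hr, Finset.sum_const_zero] at key
  have hs : ∑ i ∈ (ℛ k a).index, counit (R := k) ((ℛ k a).left i) • θ ((ℛ k a).right i) h =
      θ a h := by
    conv_rhs => rw [← sum_counit_smul (ℛ k a)]
    simp
  rw [← hs, key]
  rfl

end Twist

end DualAlgebra

/-! ### The divisibility -/

section Final

open Coalgebra TensorProduct WithConv

/-- Evaluation at `1`, the counit of the dual of `B`. -/
noncomputable def evalOne (k B : Type*) [Field k] [Ring B] [HopfAlgebra k B] :
    WithConv (B →ₗ[k] k) →+* k where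
  toFun r := r 1
  map_one' := by simp
  map_mul' r s := by simp [LinearMap.convMul_apply, Algebra.TensorProduct.one_def]
  map_zero' := rfl
  map_add' r s := rfl

end Final

/-- (Nichols–Zoeller divisibility for Hopf quotients) If `A` and `B` are
finite-dimensional Hopf algebras over a field `k` and `f : A → B` is a surjective
bialgebra homomorphism (so `B` is the quotient of `A` by a Hopf ideal), then
`dim_k B` divides `dim_k A`. -/
theorem nichols_zoeller_quotient (k A B : Type) [Field k] [Ring A] [Ring B]
    [HopfAlgebra k A] [HopfAlgebra k B] [FiniteDimensional k A] [FiniteDimensional k B]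
    (f : A →ₐc[k] B) (hf : Function.Surjective f) :
    Module.finrank k B ∣ Module.finrank k A := by
  let R := WithConv (B →ₗ[k] k)
  let H := DualModule f
  have hRfin : Module.Finite k R := Module.Finite.equiv (WithConv.linearEquiv k (B →ₗ[k] k)).symm
  have hRdim : Module.finrank k R = Module.finrank k B :=
    (WithConv.linearEquiv k (B →ₗ[k] k)).finrank_eq.trans Subspace.dual_finrank_eq
  have : Nontrivial R := (evalOne k B).domain_nontrivial
  obtain ⟨m, hm, π, hπ⟩ := exists_extremal_surjective (k := k) (R := R) H
  have : Nontrivial (R ⧸ m) := Submodule.Quotient.nontrivial_iff.mpr hm.ne_top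
  have := finite_hom (k := k) (R := R) H (R ⧸ m)
  have := finite_hom (k := k) (R := R) H (Twist f (R ⧸ m))
  have hle := LinearMap.finrank_le_finrank_of_injective
    (Twist.homMap_injective (f := f) (V := R ⧸ m))
  rw [Module.finrank_linearMap] at hle
  have hinj : Function.Injective π := by
    refine injective_of_extremal (k := k) (W := Twist f (R ⧸ m)) π hπ ?_
      (Twist.faithful hf)
    rw [Twist.finrank_eq]
    refine le_trans (le_of_eq ?_) (Nat.mul_le_mul_left _ hle)
    ring
  let e := LinearEquiv.ofBijective π ⟨hinj, hπ⟩
  have hdim := (e.restrictScalars k).finrank_eq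
  -- The base field as the trivial module, on which `r` acts through its value at `1`.
  let : Module R k := Module.compHom k (evalOne k B)
  have : IsScalarTower k R k := ⟨fun c r x => by
    change (c • r 1) * x = c * (r 1 * x)
    rw [smul_eq_mul, mul_assoc]⟩
  have hhom : Module.finrank k ((Fin _ → R) →ₗ[R] k) = Module.finrank k ((Fin _ → H) →ₗ[R] k) :=
    (LinearEquiv.congrLeft k k e).finrank_eq
  rw [finrank_hom_free, finrank_hom_pi, Module.finrank_self, mul_one] at hhom
  simp only [Module.finrank_pi_fintype, Finset.sum_const, Finset.card_univ, Fintype.card_fin,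
    smul_eq_mul] at hdim
  have hH : Module.finrank k H = Module.finrank k A := DualModule.finrank_eq f
  rw [hhom, hRdim, hH, mul_assoc] at hdim
  have hpos : 0 < Module.finrank k (R ⧸ m) := Module.finrank_pos
  exact ⟨_, (Nat.eq_of_mul_eq_mul_left hpos hdim).symm.trans (mul_comm _ _)⟩
end

section
/- The categories of finite-dimensional complex representations of the dihedral group D₈ of order 8 and of the quaternion group Q₈ of order 8 are not equivalent as tensor categories: there is no equivalence of categories between FDRep(ℂ, D₈) and FDRep(ℂ, Q₈) whose underlying functor admits a monoidal structure (even though the two categories have isomorphic Grothendieck rings). -/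
/-!
The two categories are distinguished by the Frobenius–Schur indicator of the two-dimensional
irreducible representation, in a form that needs no braiding. Let `X` be an object with maps
`c : 𝟙 ⟶ X ⊗ X` and `e : X ⊗ X ⟶ 𝟙` satisfying a zigzag identity. For a representation, `e` is a
nondegenerate invariant bilinear form `B` and `c` is its inverse tensor. If `X` is irreducible,
Schur's lemma gives `B x y = ν * B y x` with `ν = ±1`, and `c ≫ e` is the scalar `ν * dim X`.

The property `IsPlusTwoSelfDual X` asks that every endomorphism of `X` be zero or invertible and
that some such `c`, `e` satisfy `c ≫ e = 𝟙 + 𝟙`. An equivalence between categories with biproducts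
is automatically additive, so a monoidal equivalence preserves this property
(`IsPlusTwoSelfDual.map`), although it need not be `ℂ`-linear. The symmetry representation of the
square in dimension two has it, through the dot product (`isPlusTwoSelfDual_d8Rep`).

No representation of `Q₈` has it. By `symm_and_finrank` such a representation is two-dimensional
and carries a nondegenerate symmetric invariant form; this is impossible by
`QuaternionGroup.no_symm_form`: either `-1 ∈ Q₈` acts trivially, and then all of `Q₈` acts by
scalars and irreducibility fails in dimension two, or it acts by `-1`, and then an eigenvector `v`
of `i` is orthogonal to the basis `v, j v`.
-/

open CategoryTheory
open Module MonoidalCategory Limits Functor.LaxMonoidal Functor.OplaxMonoidal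
open scoped TensorProduct

/-! ### The categorical invariant -/

/-- Every endomorphism of `X` is zero or invertible, and `X` is self-dual by a coevaluation `c` and
an evaluation `e` whose composite `𝟙 ⟶ X ⊗ X ⟶ 𝟙` is `2`. Only one of the two zigzag identities is
recorded, as the other one is not needed. -/
structure IsPlusTwoSelfDual {C : Type*} [Category* C] [Preadditive C] [MonoidalCategory C]
    (X : C) : Prop where
  zero_or_isIso : ∀ f : X ⟶ X, f = 0 ∨ IsIso f
  exists_duality : ∃ (c : 𝟙_ C ⟶ X ⊗ X) (e : X ⊗ X ⟶ 𝟙_ C),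
    X ◁ c ≫ (α_ X X X).inv ≫ e ▷ X = (ρ_ X).hom ≫ (λ_ X).inv ∧ c ≫ e = 𝟙 _ + 𝟙 _

theorem IsPlusTwoSelfDual.map {C D : Type*} [Category* C] [Category* D] [Preadditive C]
    [Preadditive D] [MonoidalCategory C] [MonoidalCategory D] [HasBinaryBiproducts C] (F : C ⥤ D)
    [F.IsEquivalence] [F.Monoidal] {X : C} (h : IsPlusTwoSelfDual X) :
    IsPlusTwoSelfDual (F.obj X) := by
  have : F.Additive := Functor.additive_of_preserves_binary_products F
  obtain ⟨h1, c, e, hz, ht⟩ := h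
  refine ⟨fun f => ?_, ε F ≫ F.map c ≫ δ F _ _, μ F _ _ ≫ F.map e ≫ η F, ?_, ?_⟩
  · obtain ⟨f, rfl⟩ := F.map_surjective f
    rcases h1 f with rfl | h
    · left; simp
    · right; infer_instance
  · have := congrArg F.map hz
    simp only [Functor.map_comp, Functor.Monoidal.map_whiskerLeft,
        Functor.Monoidal.map_whiskerRight, Functor.Monoidal.map_associator_inv] at this
    -- Conjugate by the structure maps of `F` to obtain the zigzag for the transported maps.
    have h2 := congrArg (fun f => (F.obj X ◁ ε F) ≫ μ F _ _ ≫ f ≫ δ F _ _ ≫ η F ▷ _) this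
    simp only [Category.assoc, Functor.Monoidal.μ_δ_assoc] at h2
    simp only [comp_whiskerRight, whiskerLeft_comp, Category.assoc]
    rw [h2]
    simp
  · have := congrArg F.map ht
    simp only [Functor.map_comp, Functor.map_add] at this
    simp [reassoc_of% this]

/-- The invariant read off in linear algebra: `B` is the bilinear form underlying the evaluation, and
`S` lists the pure tensors of a decomposition of the image of `1` under the coevaluation. -/
theorem IsPlusTwoSelfDual.linear {G : Type} [Group G] {X : FDRep ℂ G} (h : IsPlusTwoSelfDual X) :
    (∀ f : X →ₗ[ℂ] X, (∀ g, f ∘ₗ X.ρ g = X.ρ g ∘ₗ f) → f = 0 ∨ Function.Bijective f) ∧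
    ∃ (B : X →ₗ[ℂ] X →ₗ[ℂ] ℂ) (S : Finset (X × X)),
      (∀ g x y, B (X.ρ g x) (X.ρ g y) = B x y) ∧
      (∀ w, ∑ i ∈ S, B w i.1 • i.2 = w) ∧
      ∑ i ∈ S, B i.1 i.2 = 2 := by
  obtain ⟨h1, c, e, hz, ht⟩ := h
  constructor
  · intro f hf
    let F : X ⟶ X := ⟨FGModuleCat.ofHom f, fun g => by ext x; exact LinearMap.congr_fun (hf g) x⟩
    rcases h1 F with h | h
    · left
      exact congrArg (fun k : X ⟶ X => k.hom.hom.hom) h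
    · right
      exact (FDRep.isoToLinearEquiv (asIso F)).bijective
  · let e' : X ⊗[ℂ] X →ₗ[ℂ] ℂ := e.hom.hom.hom
    let t : X ⊗[ℂ] X := c.hom.hom.hom (1 : ℂ)
    obtain ⟨S, hS⟩ := TensorProduct.exists_finset t
    refine ⟨TensorProduct.curry e', S, ?_, ?_, ?_⟩
    · intro g x y
      exact congrArg (fun k : (X ⊗ X).V ⟶ (𝟙_ (FDRep ℂ G)).V =>
        k.hom.hom (x ⊗ₜ[ℂ] y : X ⊗[ℂ] X)) (e.comm g)
    · intro w
      have h2 : (TensorProduct.lid ℂ X)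
          ((e'.rTensor X) ((TensorProduct.assoc ℂ X X X).symm (w ⊗ₜ t))) = w := by
        have hz' := congrArg Action.Hom.hom hz
        simp only [Action.comp_hom, Action.whiskerLeft_hom, Action.whiskerRight_hom,
          Action.associator_inv_hom, Action.leftUnitor_inv_hom, Action.rightUnitor_hom_hom] at hz'
        have h3 := congrArg (fun k : X.V ⊗ 𝟙_ (FGModuleCat ℂ) ⟶ 𝟙_ (FGModuleCat ℂ) ⊗ X.V =>
          (k.hom.hom (w ⊗ₜ[ℂ] (1 : ℂ) : X ⊗[ℂ] ℂ) : ℂ ⊗[ℂ] X)) hz'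
        have h4 : (e'.rTensor X) ((TensorProduct.assoc ℂ X X X).symm (w ⊗ₜ t)) =
            (TensorProduct.lid ℂ X).symm (TensorProduct.rid ℂ X (w ⊗ₜ 1)) := h3
        rw [h4]; simp
      rw [hS, TensorProduct.tmul_sum] at h2
      simpa using h2
    · have h2 : e' t = 2 := by
        have h3 := congrArg (fun k : 𝟙_ (FDRep ℂ G) ⟶ 𝟙_ (FDRep ℂ G) =>
          (k.hom.hom.hom (1 : ℂ) : ℂ)) ht
        have h4 : e' t = (1 : ℂ) + (1 : ℂ) := h3
        rw [h4]; norm_num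
      rw [hS] at h2
      simpa using h2

/-! ### Irreducible representations with an invariant form -/

theorem scalar_of_zero_or_bijective {W : Type*} [AddCommGroup W] [Module ℂ W]
    [FiniteDimensional ℂ W] [Nontrivial W] {G : Type*} [Group G] (ρ : Representation ℂ G W)
    (hS : ∀ f : W →ₗ[ℂ] W, (∀ g, f ∘ₗ ρ g = ρ g ∘ₗ f) → f = 0 ∨ Function.Bijective f)
    (f : W →ₗ[ℂ] W) (hf : ∀ g, f ∘ₗ ρ g = ρ g ∘ₗ f) : ∃ c : ℂ, ∀ x, f x = c • x := by
  obtain ⟨c, hc⟩ := Module.End.exists_eigenvalue f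
  obtain ⟨v, hv⟩ := hc.exists_hasEigenvector
  refine ⟨c, fun x => ?_⟩
  rcases hS (f - c • LinearMap.id) (fun g => by
    rw [LinearMap.sub_comp, LinearMap.comp_sub, hf g]; ext; simp) with h | h
  · simpa [sub_eq_zero] using LinearMap.congr_fun h x
  · refine absurd (h.1 (a₁ := v) (a₂ := 0) ?_) hv.2
    simp [hv.apply_eq_smul]

/-- The number `∑ B i.1 i.2` equals `ν * dim W`, where `ν = ±1` is the sign of the symmetry of `B`;
if it is `2`, then `ν = 1` and `dim W = 2`. -/
theorem symm_and_finrank {W : Type*} [AddCommGroup W] [Module ℂ W] [FiniteDimensional ℂ W]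
    {G : Type*} [Group G] (ρ : Representation ℂ G W)
    (B : W →ₗ[ℂ] W →ₗ[ℂ] ℂ) (S : Finset (W × W))
    (hinv : ∀ g x y, B (ρ g x) (ρ g y) = B x y)
    (hz : ∀ w, ∑ i ∈ S, B w i.1 • i.2 = w)
    (htr : ∑ i ∈ S, B i.1 i.2 = 2)
    (hS : ∀ f : W →ₗ[ℂ] W, (∀ g, f ∘ₗ ρ g = ρ g ∘ₗ f) → f = 0 ∨ Function.Bijective f) :
    (∀ x y, B x y = B y x) ∧ finrank ℂ W = 2 := by
  have hnt : Nontrivial W := by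
    by_contra h
    rw [not_nontrivial_iff_subsingleton] at h
    have : ∑ i ∈ S, B i.1 i.2 = 0 :=
      Finset.sum_eq_zero fun i _ => by rw [Subsingleton.elim i.1 0]; simp
    rw [this] at htr
    norm_num at htr
  have hinj : Function.Injective B := by
    rw [injective_iff_map_eq_zero]
    intro w hw
    rw [← hz w, hw]; simp
  let E : W ≃ₗ[ℂ] Dual ℂ W := LinearEquiv.ofInjectiveOfFinrankEq B hinj
    Subspace.dual_finrank_eq.symm
  have hE : ∀ x y, B (E.symm (B.flip x)) y = B y x := fun x y => by
    have := LinearMap.congr_fun (E.apply_symm_apply (B.flip x)) y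
    exact this
  have hinv' : ∀ g x y, B (ρ g x) y = B x (ρ g⁻¹ y) := fun g x y => by
    rw [← hinv g x (ρ g⁻¹ y), Representation.self_inv_apply]
  -- The asymmetry `A` of `B`, given by `B (A x) y = B y x`, is an intertwiner, hence a scalar.
  obtain ⟨c, hc⟩ := scalar_of_zero_or_bijective ρ hS (E.symm.toLinearMap ∘ₗ B.flip) (fun g => by
    ext x
    apply hinj
    ext y
    simp only [LinearMap.comp_apply, LinearEquiv.coe_coe]
    rw [hE, hinv', hE, hinv', inv_inv])
  have hB : ∀ x y, B y x = c * B x y := fun x y => by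
    have h := hE x y
    have h2 := hc x
    simp only [LinearMap.comp_apply, LinearEquiv.coe_coe] at h2
    rw [← h, h2]; simp
  -- The zigzag writes the identity as a sum of rank-one maps, whose traces add up to `dim W`.
  have htrace : (finrank ℂ W : ℂ) = ∑ i ∈ S, B i.2 i.1 := by
    have : (∑ i ∈ S, (B.flip i.1).smulRight i.2 : W →ₗ[ℂ] W) = LinearMap.id := by
      ext w; simpa using hz w
    rw [← LinearMap.trace_id, ← this, map_sum]
    exact Finset.sum_congr rfl fun i _ => by simp
  have h2 : c * (finrank ℂ W : ℂ) = 2 := by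
    rw [htrace, Finset.mul_sum, ← htr]
    exact Finset.sum_congr rfl fun i _ => (hB _ _).symm
  have hcc : c = 1 ∨ c = -1 := by
    obtain ⟨x, hx⟩ := exists_ne (0 : W)
    obtain ⟨y, hy⟩ : ∃ y, B x y ≠ 0 := by
      by_contra! h
      exact hx (hinj (by ext y; simp [h y]))
    have h1 := hB y x
    rw [hB x y, ← mul_assoc] at h1
    have h3 : c * c = 1 := mul_right_cancel₀ hy (by rw [one_mul]; exact h1.symm)
    exact mul_self_eq_one_iff.mp h3
  rcases hcc with rfl | rfl
  · exact ⟨fun x y => by simpa using hB y x, by rw [one_mul] at h2; exact_mod_cast h2⟩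
  · exfalso
    have h3 : ((finrank ℂ W + 2 : ℕ) : ℂ) = 0 := by push_cast; linear_combination -h2
    norm_cast at h3

/-! ### Quaternion side -/

open QuaternionGroup in
/-- Here `i = a 1`, `j = xa 0`, and `a 2` is the central element `-1`. -/
theorem QuaternionGroup.no_symm_form {W : Type*} [AddCommGroup W] [Module ℂ W]
    [FiniteDimensional ℂ W]
    (ρ : Representation ℂ (QuaternionGroup 2) W)
    (B : W →ₗ[ℂ] W →ₗ[ℂ] ℂ)
    (hinv : ∀ g x y, B (ρ g x) (ρ g y) = B x y)
    (hinj : ∀ x, (∀ y, B x y = 0) → x = 0)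
    (hsymm : ∀ x y, B x y = B y x) (hdim : finrank ℂ W = 2)
    (hS : ∀ f : W →ₗ[ℂ] W, (∀ g, f ∘ₗ ρ g = ρ g ∘ₗ f) → f = 0 ∨ Function.Bijective f) :
    False := by
  have hnt : Nontrivial W := Module.nontrivial_of_finrank_pos (R := ℂ) (by omega)
  have hsc := scalar_of_zero_or_bijective ρ hS
  have hmul : ∀ g h x, ρ g (ρ h x) = ρ (g * h) x := fun g h x => by simp
  obtain ⟨c, hc⟩ := hsc (ρ (a 2)) (fun g => by
    rw [← Module.End.mul_eq_comp, ← Module.End.mul_eq_comp, ← map_mul, ← map_mul]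
    congr 1; revert g; decide)
  have hcc : c = 1 ∨ c = -1 := by
    obtain ⟨x, hx⟩ := exists_ne (0 : W)
    have h1 := hmul (a 2) (a 2) x
    rw [hc, hc, smul_smul, show (a 2 * a 2 : QuaternionGroup 2) = 1 by decide, map_one] at h1
    exact mul_self_eq_one_iff.mp (smul_left_injective ℂ hx (by simpa using h1))
  rcases hcc with rfl | rfl
  -- If `-1` acts trivially, all group elements act by scalars, so every linear map intertwines.
  · have hg : ∀ g, ∃ c : ℂ, ∀ x, ρ g x = c • x := fun g => hsc (ρ g) fun h => by
      have : g * h = h * g ∨ g * h = a 2 * (h * g) := by revert g h; decide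
      ext x
      simp only [LinearMap.comp_apply, hmul]
      rcases this with h1 | h1
      · rw [h1]
      · rw [h1, ← hmul, hc, one_smul]
    have hall : ∀ f : W →ₗ[ℂ] W, ∃ c : ℂ, ∀ x, f x = c • x := fun f => hsc f fun g => by
      obtain ⟨d, hd⟩ := hg g
      ext x; simp [hd]
    let b := Module.finBasisOfFinrankEq ℂ W hdim
    obtain ⟨d, hd⟩ := hall (b.constr ℂ ![0, b 1])
    have h0 := hd (b 0)
    have h1 := hd (b 1)
    simp only [Basis.constr_basis, Matrix.cons_val_zero, Matrix.cons_val_one] at h0 h1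
    have : d = 0 := by simpa [b.ne_zero] using h0.symm
    rw [this, zero_smul] at h1
    exact b.ne_zero 1 h1
  -- If `-1` acts by `-1`, the elements of order four act by skew-adjoint maps.
  · have hneg : ∀ g, g * g = a 2 → ∀ x y, B (ρ g x) y = - B x (ρ g y) := fun g hg x y => by
      rw [← hinv g x, hmul, hg, hc]; simp
    have hiso : ∀ g, g * g = a 2 → ∀ x, B x (ρ g x) = 0 := fun g hg x => by
      have h1 := hneg g hg x x
      rw [hsymm] at h1
      exact self_eq_neg.mp h1
    obtain ⟨l, hl⟩ := Module.End.exists_eigenvalue (ρ (a 1))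
    obtain ⟨v, hv⟩ := hl.exists_hasEigenvector
    have hiv : ρ (a 1) v = l • v := hv.apply_eq_smul
    have hll : l * l = -1 := by
      have h1 := hmul (a 1) (a 1) v
      rw [hiv, map_smul, hiv, smul_smul, show (a 1 * a 1 : QuaternionGroup 2) = a 2 by decide,
        hc] at h1
      exact smul_left_injective ℂ hv.2 h1
    have hl0 : l ≠ 0 := by rintro rfl; norm_num at hll
    have hijv : ρ (a 1) (ρ (xa 0) v) = -(l • ρ (xa 0) v) := by
      rw [hmul, show (a 1 * xa 0 : QuaternionGroup 2) = a 2 * (xa 0 * a 1) by decide,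
        ← hmul, hc, ← hmul, hiv]; simp
    have hvv : B v v = 0 := by
      have := hiso (a 1) (by decide) v
      rw [hiv] at this
      simpa [hl0] using this
    have hvj : B v (ρ (xa 0) v) = 0 := hiso (xa 0) (by decide) v
    have hj0 : ρ (xa 0) v ≠ 0 := by
      intro h
      have h1 := hmul (xa 0) (xa 0) v
      rw [h, show (xa 0 * xa 0 : QuaternionGroup 2) = a 2 by decide, hc] at h1
      exact hv.2 (by simpa using h1)
    have hli : LinearIndependent ℂ ![v, ρ (xa 0) v] := by
      rw [LinearIndependent.pair_iff]
      intro s t hst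
      have h1 : ρ (a 1) (s • v + t • ρ (xa 0) v) = 0 := by rw [hst, map_zero]
      rw [map_add, map_smul, map_smul, hiv, hijv] at h1
      have h2 : (2 * l * s) • v = 0 := by
        have h3 : (2 * l * s) • v = l • (s • v + t • ρ (xa 0) v) +
            (s • l • v + t • -(l • ρ (xa 0) v)) := by module
        rw [h3, hst, h1]; simp
      have hs : s = 0 := by simpa [hl0, hv.2] using h2
      refine ⟨hs, ?_⟩
      rw [hs] at hst
      simpa [hj0] using hst
    refine hv.2 (hinj v fun y => ?_)
    let b := basisOfLinearIndependentOfCardEqFinrank hli (by simp [hdim])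
    have hb : B v = 0 := b.ext fun i => by
      fin_cases i <;> simp [b, hvv, hvj]
    rw [hb]; rfl

/-! ### Dihedral side -/

/-- The symmetries of the square as integer matrices: `r 1` is the rotation by a quarter turn and
`sr 0` the reflection in the first coordinate axis. -/
def d8Matrix : DihedralGroup 4 →* Matrix (Fin 2) (Fin 2) ℤ where
  toFun
    | .r i => !![0, -1; 1, 0] ^ i.val
    | .sr i => !![1, 0; 0, -1] * !![0, -1; 1, 0] ^ i.val
  map_one' := by decide
  map_mul' := by decide

/-- The two-dimensional irreducible complex representation of `D₈`. -/
noncomputable def d8Rep : Representation ℂ (DihedralGroup 4) (Fin 2 → ℂ) :=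
  (Matrix.toLinAlgEquiv' : Matrix (Fin 2) (Fin 2) ℂ ≃ₐ[ℂ] _).toRingEquiv.toMonoidHom.comp
    ((Int.castRingHom ℂ).mapMatrix.toMonoidHom.comp d8Matrix)

theorem d8Rep_apply (g v) : d8Rep g v = ((d8Matrix g).map (Int.cast : ℤ → ℂ)).mulVec v := rfl

theorem d8Matrix_transpose_mul (g) : (d8Matrix g).transpose * d8Matrix g = 1 := by
  revert g; decide

theorem d8Matrix_mul_transpose (g) : d8Matrix g * (d8Matrix g).transpose = 1 := by
  revert g; decide

/-- The dot product as a linear map on the tensor square. -/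
noncomputable def dotForm : (Fin 2 → ℂ) ⊗[ℂ] (Fin 2 → ℂ) →ₗ[ℂ] ℂ :=
  TensorProduct.lift (dotProductBilin ℂ ℂ)

theorem dotForm_tmul (x y) : dotForm (x ⊗ₜ y) = x ⬝ᵥ y := rfl

/-- The tensor `∑ i, eᵢ ⊗ eᵢ` inverse to the dot product. -/
noncomputable def dotTensor : (Fin 2 → ℂ) ⊗[ℂ] (Fin 2 → ℂ) :=
  ∑ i, Pi.single i 1 ⊗ₜ Pi.single i 1

theorem dotForm_invariant (g x y) : dotForm (d8Rep g x ⊗ₜ d8Rep g y) = dotForm (x ⊗ₜ y) := by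
  have h := congrArg (fun M => M.map (Int.castRingHom ℂ)) (d8Matrix_transpose_mul g)
  simp only [Matrix.map_mul, Matrix.map_one _ (map_zero (Int.castRingHom ℂ))
    (map_one (Int.castRingHom ℂ)), Matrix.transpose_map] at h
  rw [dotForm_tmul, dotForm_tmul, d8Rep_apply, d8Rep_apply, Matrix.dotProduct_mulVec,
    Matrix.vecMul_mulVec]
  erw [h]
  simp

theorem dotTensor_invariant (g) : TensorProduct.map (d8Rep g) (d8Rep g) dotTensor = dotTensor := by
  have h : ∀ i j, (d8Matrix g i 0 * d8Matrix g j 0 + d8Matrix g i 1 * d8Matrix g j 1 : ℂ) =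
      ((1 : Matrix (Fin 2) (Fin 2) ℤ) i j : ℂ) := fun i j => by
    rw [← d8Matrix_mul_transpose g]
    simp [Matrix.mul_apply]
  have hs : ∀ i, d8Rep g (Pi.single i 1) =
      (d8Matrix g 0 i : ℂ) • Pi.single 0 1 + (d8Matrix g 1 i : ℂ) • Pi.single 1 1 := fun i => by
    rw [d8Rep_apply]
    ext k
    fin_cases k <;> simp
  simp only [dotTensor, Fin.sum_univ_two, map_add, TensorProduct.map_tmul, hs,
    TensorProduct.tmul_add, TensorProduct.add_tmul, TensorProduct.tmul_smul,
    ← TensorProduct.smul_tmul']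
  have key : ∀ (a b c d : ℂ) (p q r s : (Fin 2 → ℂ) ⊗[ℂ] (Fin 2 → ℂ)),
      a * a + b * b = 1 → a * c + b * d = 0 → c * c + d * d = 1 →
      (a * a) • p + (a * c) • q + ((a * c) • r + (c * c) • s) +
        ((b * b) • p + (b * d) • q + ((b * d) • r + (d * d) • s)) = p + s := by
    intro a b c d p q r s h1 h2 h3
    trans (a * a + b * b) • p + (a * c + b * d) • q + (a * c + b * d) • r + (c * c + d * d) • s
    · module
    · rw [h1, h2, h3]; module
  refine Eq.trans ?_ (key (d8Matrix g 0 0) (d8Matrix g 0 1) (d8Matrix g 1 0) (d8Matrix g 1 1)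
    _ (Pi.single 0 1 ⊗ₜ Pi.single 1 1) (Pi.single 1 1 ⊗ₜ Pi.single 0 1) _
    (by simpa using h 0 0) (by simpa using h 0 1) (by simpa using h 1 1))
  module

theorem d8Rep_schur (f : (Fin 2 → ℂ) →ₗ[ℂ] (Fin 2 → ℂ)) (hf : ∀ g, f ∘ₗ d8Rep g = d8Rep g ∘ₗ f) :
    ∃ c : ℂ, ∀ x, f x = c • x := by
  have hR : ∀ x, d8Rep (.r 1) x = ![-x 1, x 0] := fun x => by
    rw [d8Rep_apply, show d8Matrix (.r 1) = !![0, -1; 1, 0] by decide]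
    ext k; fin_cases k <;> simp [Matrix.mulVec, dotProduct]
  have hT : ∀ x, d8Rep (.sr 0) x = ![x 0, -x 1] := fun x => by
    rw [d8Rep_apply, show d8Matrix (.sr 0) = !![1, 0; 0, -1] by decide]
    ext k; fin_cases k <;> simp [Matrix.mulVec, dotProduct]
  have h1 := LinearMap.congr_fun (hf (.r 1)) (Pi.single 0 1)
  have h2 := LinearMap.congr_fun (hf (.sr 0)) (Pi.single 0 1)
  simp only [LinearMap.comp_apply, hR, hT] at h1 h2
  have e0 : (![1, 0] : Fin 2 → ℂ) = Pi.single 0 1 := by ext k; fin_cases k <;> simp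
  have e1 : (![0, 1] : Fin 2 → ℂ) = Pi.single 1 1 := by ext k; fin_cases k <;> simp
  simp [e0, e1] at h1 h2
  have h3 : f (Pi.single 0 1) 1 = 0 := by
    have := congrFun h2 1
    exact self_eq_neg.mp (by simpa using this)
  refine ⟨f (Pi.single 0 1) 0, fun x => ?_⟩
  have hx : x = x 0 • Pi.single 0 1 + x 1 • Pi.single 1 1 := by
    ext k; fin_cases k <;> simp
  conv_lhs => rw [hx, map_add, map_smul, map_smul, h1]
  ext k
  fin_cases k <;> simp [h3, mul_comm]

theorem dotForm_zigzag (w : Fin 2 → ℂ) : (dotForm.rTensor (Fin 2 → ℂ))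
    ((TensorProduct.assoc ℂ _ _ _).symm (w ⊗ₜ dotTensor)) = (1 : ℂ) ⊗ₜ[ℂ] w := by
  have hx : w = w 0 • Pi.single 0 1 + w 1 • Pi.single 1 1 := by
    ext k; fin_cases k <;> simp
  apply (TensorProduct.lid ℂ _).injective
  simp [dotTensor, TensorProduct.tmul_add, dotForm_tmul, ← hx]

theorem dotForm_dotTensor : dotForm dotTensor = 2 := by
  simp [dotTensor, dotForm_tmul]; norm_num

theorem isPlusTwoSelfDual_d8Rep : IsPlusTwoSelfDual (FDRep.of d8Rep) := by
  refine ⟨fun f => ?_, ⟨FGModuleCat.ofHom (LinearMap.toSpanSingleton ℂ _ dotTensor), fun g => ?_⟩,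
    ⟨FGModuleCat.ofHom dotForm, fun g => ?_⟩, ?_, ?_⟩
  · let F : (Fin 2 → ℂ) →ₗ[ℂ] (Fin 2 → ℂ) := f.hom.hom.hom
    obtain ⟨c, hc⟩ := d8Rep_schur F fun g =>
      congrArg (fun k : (FDRep.of d8Rep).V ⟶ (FDRep.of d8Rep).V => k.hom.hom) (f.comm g)
    have hf : f = c • 𝟙 _ := by
      apply Action.hom_ext
      apply FGModuleCat.hom_ext
      exact LinearMap.ext hc
    by_cases h0 : c = 0
    · left; rw [hf, h0, zero_smul]
    · right
      exact ⟨c⁻¹ • 𝟙 _, by simp [hf, smul_smul, h0], by simp [hf, smul_smul, h0]⟩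
  · apply FGModuleCat.hom_ext
    apply LinearMap.ext_ring (R := ℂ)
    change LinearMap.toSpanSingleton ℂ _ dotTensor (1 : ℂ) = TensorProduct.map (d8Rep g) (d8Rep g)
      (LinearMap.toSpanSingleton ℂ _ dotTensor (1 : ℂ))
    rw [LinearMap.toSpanSingleton_apply, one_smul, dotTensor_invariant]
  · apply FGModuleCat.hom_ext
    exact TensorProduct.ext' (dotForm_invariant g)
  · apply Action.hom_ext
    simp only [Action.comp_hom, Action.whiskerLeft_hom, Action.whiskerRight_hom,
          Action.associator_inv_hom, Action.leftUnitor_inv_hom, Action.rightUnitor_hom_hom]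
    apply FGModuleCat.hom_ext
    apply TensorProduct.ext'
    intro w a
    have h : (dotForm.rTensor (Fin 2 → ℂ)) ((TensorProduct.assoc ℂ _ _ _).symm
      (w ⊗ₜ (LinearMap.toSpanSingleton ℂ _ dotTensor a))) =
        (TensorProduct.lid ℂ _).symm (TensorProduct.rid ℂ _ (w ⊗ₜ a)) := by
      have := congrArg (fun k => a • k) (dotForm_zigzag w)
      simpa [LinearMap.toSpanSingleton_apply] using this
    exact h
  · apply Action.hom_ext
    apply FGModuleCat.hom_ext
    apply LinearMap.ext_ring (R := ℂ)
    have h : dotForm (LinearMap.toSpanSingleton ℂ _ dotTensor (1 : ℂ)) = (1 : ℂ) + 1 := by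
      rw [LinearMap.toSpanSingleton_apply, one_smul, dotForm_dotTensor]; norm_num
    exact h

/-- The tensor categories of finite-dimensional complex representations of the dihedral
group `D₈` of order 8 and of the quaternion group `Q₈` are not tensor equivalent: there
is no equivalence of categories between them whose underlying functor admits a monoidal
structure (even though they have isomorphic Grothendieck rings). -/
theorem fdRep_D8_not_monoidally_equivalent_fdRep_Q8 :
    ¬ ∃ e : FDRep ℂ (DihedralGroup 4) ≌ FDRep ℂ (QuaternionGroup 2),
        Nonempty e.functor.Monoidal := by
  rintro ⟨F, ⟨hF⟩⟩
  obtain ⟨hS, B, S, hinv, hz, htr⟩ := (isPlusTwoSelfDual_d8Rep.map F.functor).linear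
  obtain ⟨hsymm, hdim⟩ := symm_and_finrank _ B S hinv hz htr hS
  refine QuaternionGroup.no_symm_form _ B hinv (fun x hx => ?_) hsymm hdim hS
  rw [← hz x]
  simp [hx]
end

section
/- Let C be a rigid abelian monoidal category whose unit object 𝟙 is simple and in which every monomorphism splits (semisimplicity). Then for every simple object V of C, the right dual V* is isomorphic to the left dual *V; equivalently, V is isomorphic to its double dual V**. -/
open CategoryTheory CategoryTheory.MonoidalCategory

/-!
Since `𝟙` is simple, the coevaluation `𝟙 ⟶ V ⊗ V*` is a nonzero, hence split, monomorphism. A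
retraction `V ⊗ V* ⟶ 𝟙` corresponds by adjunction to a nonzero morphism `f : V ⟶ V**`, which is
again a split monomorphism because `V` is simple. It is an isomorphism as soon as `V**` has no
nontrivial idempotents. This holds for `V` by Schur's lemma, and passes to right duals because
`e ↦ ᘁe` is an injective anti-homomorphism `End Y → End X` when `Y` is right dual to `X`
(`idempotent_eq_zero_or_id_of_exactPairing`). Finally `V** ≅ V` makes both `V*` and `ᘁV` left
duals of `V`, so that they are isomorphic.
-/

section

variable {C : Type*} [Category C] [Abelian C] [MonoidalCategory C]

theorem whiskerLeft_zero_of_exactPairing (X Y : C) [ExactPairing X Y] {A B : C} :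
    X ◁ (0 : A ⟶ B) = 0 := by
  have := (tensorLeftAdjunction X Y).isRightAdjoint
  exact (tensorLeft X).map_zero A B

theorem zero_whiskerRight_of_exactPairing (X Y : C) [ExactPairing X Y] {A B : C} :
    (0 : A ⟶ B) ▷ X = 0 := by
  have := (tensorRightAdjunction X Y).isLeftAdjoint
  exact (tensorRight X).map_zero A B

theorem tensorRightHomEquiv_zero (X Y : C) [ExactPairing X Y] (A B : C) :
    (tensorRightHomEquiv A X Y B).symm 0 = 0 := by
  simp [tensorRightHomEquiv, zero_whiskerRight_of_exactPairing X Y]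

theorem leftAdjointMate_injective {Y : C} [HasLeftDual Y] :
    Function.Injective (fun e : Y ⟶ Y => (ᘁe)) := by
  intro e e' h
  -- Both `e` and `ᘁe` are transposes of the same pairing `e ▷ ᘁY ≫ ε_ : Y ⊗ ᘁY ⟶ 𝟙`.
  have h1 : e ▷ (ᘁY) ≫ ε_ (ᘁY) Y = e' ▷ (ᘁY) ≫ ε_ (ᘁY) Y := by
    rw [← leftAdjointMate_comp_evaluation, ← leftAdjointMate_comp_evaluation]
    exact congrArg (fun t => Y ◁ t ≫ ε_ (ᘁY) Y) h
  have h2 := tensorRightHomEquiv_whiskerRight_comp_evaluation (X := (ᘁY)) e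
  have h3 := tensorRightHomEquiv_whiskerRight_comp_evaluation (X := (ᘁY)) e'
  exact (cancel_mono (λ_ Y).inv).1 (h2.symm.trans ((congrArg _ h1).trans h3))

theorem leftAdjointMate_zero {Y : C} [HasLeftDual Y] : (ᘁ(0 : Y ⟶ Y)) = 0 := by
  simp [leftAdjointMate, whiskerLeft_zero_of_exactPairing (ᘁY) Y,
    zero_whiskerRight_of_exactPairing (ᘁY) Y]

/-- The absence of nontrivial idempotents passes from an object to its right dual. -/
theorem idempotent_eq_zero_or_id_of_exactPairing (X Y : C) [ExactPairing X Y]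
    (hX : ∀ e : X ⟶ X, e ≫ e = e → e = 0 ∨ e = 𝟙 X) (e : Y ⟶ Y) (he : e ≫ e = e) :
    e = 0 ∨ e = 𝟙 Y := by
  let _ : HasLeftDual Y := ⟨X⟩
  have h1 : (ᘁe) ≫ (ᘁe) = (ᘁe) := by rw [← comp_leftAdjointMate, he]
  rcases hX (ᘁe) h1 with h | h
  · left
    apply leftAdjointMate_injective
    exact h.trans (leftAdjointMate_zero (Y := Y)).symm
  · right
    apply leftAdjointMate_injective
    exact h.trans (leftAdjointMate_id (X := Y)).symm

theorem coevaluation_ne_zero (X Y : C) [ExactPairing X Y] (hX : 𝟙 X ≠ 0) :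
    η_ X Y ≠ 0 := by
  intro h
  have h2 := ExactPairing.evaluation_coevaluation X Y
  rw [h, zero_whiskerRight_of_exactPairing X Y] at h2
  apply hX
  have : 𝟙 X = (λ_ X).inv ≫ ((λ_ X).hom ≫ (ρ_ X).inv) ≫ (ρ_ X).hom := by simp
  rw [this, ← h2]
  simp

end

/-- In a semisimple rigid abelian monoidal category with simple unit (semisimplicity
being expressed by the condition that every monomorphism splits), every simple object
`V` has its right dual isomorphic to its left dual; equivalently, `V` is isomorphic to
its double dual. -/
theorem right_dual_iso_left_dual_of_semisimple (C : Type*) [Category C] [Abelian C]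
    [MonoidalCategory C] [RigidCategory C] [Simple (𝟙_ C)]
    (hsplit : ∀ (X Y : C) (f : X ⟶ Y), Mono f → ∃ r : Y ⟶ X, f ≫ r = 𝟙 X)
    (V : C) [Simple V] :
    Nonempty ((Vᘁ) ≅ (ᘁV)) ∧ Nonempty (((Vᘁ)ᘁ) ≅ V) := by
  have hsimple {S X : C} [Simple S] (f : S ⟶ X) (hf : f ≠ 0) : ∃ r : X ⟶ S, f ≫ r = 𝟙 S :=
    hsplit _ _ f (mono_of_nonzero_from_simple hf)
  have main : Nonempty (((Vᘁ)ᘁ) ≅ V) := by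
    obtain ⟨t, ht⟩ := hsimple (η_ V (Vᘁ)) (coevaluation_ne_zero V (Vᘁ) (id_nonzero V))
    have ht0 : t ≠ 0 := by
      rintro rfl
      exact id_nonzero (𝟙_ C) (by simpa using ht.symm)
    let f : V ⟶ 𝟙_ C ⊗ (Vᘁ)ᘁ := tensorRightHomEquiv V (Vᘁ) ((Vᘁ)ᘁ) (𝟙_ C) t
    have hf : f ≠ 0 := by
      intro h
      apply ht0
      rw [← (tensorRightHomEquiv V (Vᘁ) ((Vᘁ)ᘁ) (𝟙_ C)).symm_apply_apply t]
      exact (congrArg _ h).trans (tensorRightHomEquiv_zero _ _ _ _)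
    have hf' : f ≫ (λ_ _).hom ≠ 0 := by
      intro h
      apply hf
      rw [← cancel_mono (λ_ ((Vᘁ)ᘁ)).hom, h, Limits.zero_comp]
    obtain ⟨r, hr⟩ := hsimple _ hf'
    generalize f ≫ (λ_ _).hom = g at hf' hr
    have hV (e : V ⟶ V) (he : e ≫ e = e) : e = 0 ∨ e = 𝟙 V := by
      by_cases h0 : e = 0
      · exact Or.inl h0
      · have := isIso_of_hom_simple h0
        right
        rw [← cancel_epi e, he, Category.comp_id]
    have hVV := idempotent_eq_zero_or_id_of_exactPairing (Vᘁ) ((Vᘁ)ᘁ)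
      (idempotent_eq_zero_or_id_of_exactPairing V (Vᘁ) hV)
    rcases hVV (r ≫ g) (by simp [reassoc_of% hr]) with h | h
    · refine absurd ?_ hf'
      calc g = g ≫ r ≫ g := by simp [reassoc_of% hr]
        _ = 0 := by rw [h, Limits.comp_zero]
    · exact ⟨⟨r, g, h, hr⟩⟩
  refine ⟨?_, main⟩
  obtain ⟨i⟩ := main
  exact ⟨leftDualIso (exactPairingCongrRight i.symm) (inferInstanceAs (ExactPairing (ᘁV) V))⟩
end

section
/- For every prime p, the second group cohomology group H²(ℤ/p × ℤ/p, ℂˣ), with ℤ/p × ℤ/p acting trivially on the multiplicative group ℂˣ, has exactly p elements (it is cyclic of order p). -/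
/-!
Let `G = ℤ/p × ℤ/p` with generators `a = (1, 0)`, `b = (0, 1)`. For a 2-cocycle `f` on an abelian
group with trivial coefficients, the commutator pairing `β(g, h) = f(g, h) - f(h, g)` is
bimultiplicative and alternating. Sending `f` to `β(a, b)` is a linear map from 2-cocycles to `ℂˣ`,
and the theorem follows from the first isomorphism theorem once its kernel and range are known.

* The range is the group of `p`-th roots of unity: `p β(a, b) = β(a ^ p, b) = 0`, and for
  `p • ζ = 0` the bilinear cocycle `((x, y), (x', y')) ↦ (x y') • ζ` is sent to `ζ`.
* The kernel consists of the coboundaries: if `β(a, b) = 0` then `β = 0`, as `a` and `b` generate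
  `G`, so `f` is symmetric. A symmetric cocycle defines an abelian extension of `G` by `ℂˣ`, which
  splits because `ℂˣ` is divisible, hence an injective `ℤ`-module
  (`exists_eq_coboundary_of_symmetric`).
-/

namespace CardH2

section Pairing

variable {G A : Type*} [CommGroup G] [AddCommGroup A] {f : G × G → A}

lemma pairing_mul_left (hf : ∀ g h j, f (g * h, j) + f (g, h) = f (h, j) + f (g, h * j))
    (g h k : G) :
    f (g * h, k) - f (k, g * h) = (f (g, k) - f (k, g)) + (f (h, k) - f (k, h)) := by
  have h1 := hf g h k
  have h2 := hf k g h
  have h3 := hf g k h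
  rw [mul_comm k g] at h2
  rw [mul_comm k h] at h3
  grind

lemma pairing_pow_left (hf : ∀ g h j, f (g * h, j) + f (g, h) = f (h, j) + f (g, h * j))
    (g k : G) (n : ℕ) :
    f (g ^ n, k) - f (k, g ^ n) = n • (f (g, k) - f (k, g)) := by
  induction n with
  | zero =>
    have := pairing_mul_left hf 1 1 k
    simpa using this
  | succ n ih => rw [pow_succ, pairing_mul_left hf, ih, succ_nsmul]

/-- If the commutator pairing vanishes on a pair of generators, then the cocycle is symmetric. -/
lemma symmetric_of_generators
    (hf : ∀ g h j, f (g * h, j) + f (g, h) = f (h, j) + f (g, h * j))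
    {a b : G} (hgen : ∀ g : G, ∃ m n : ℕ, g = a ^ m * b ^ n)
    (hab : f (a, b) - f (b, a) = 0) (g h : G) : f (g, h) = f (h, g) := by
  have key : ∀ k, f (a, k) - f (k, a) = 0 → f (b, k) - f (k, b) = 0 →
      ∀ g, f (g, k) - f (k, g) = 0 := by
    intro k h1 h2 g
    obtain ⟨m, n, rfl⟩ := hgen g
    rw [pairing_mul_left hf, pairing_pow_left hf, pairing_pow_left hf, h1, h2]
    simp
  have hba : f (b, a) - f (a, b) = 0 := by rw [← neg_sub, hab, neg_zero]
  have ha : ∀ g, f (a, g) - f (g, a) = 0 := fun g => by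
    rw [← neg_sub, key a (sub_self _) hba g, neg_zero]
  have hb : ∀ g, f (b, g) - f (g, b) = 0 := fun g => by
    rw [← neg_sub, key b hab (sub_self _) g, neg_zero]
  exact sub_eq_zero.1 (key h (ha h) (hb h) g)

end Pairing

section Extension

/-- The underlying set `A × G` of the extension of `G` by `A` attached to a 2-cocycle `f`. The
cocycle is a phantom parameter that the group structure depends on. -/
@[ext]
structure CocycleExt {G A : Type*} (f : G × G → A) where
  /-- The component in the kernel `A`. -/
  fst : A
  /-- The projection to the quotient `G`. -/
  snd : G

variable {G A : Type*} [CommGroup G] [AddCommGroup A] {f : G × G → A}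

lemma map_one_left (hf : ∀ g h j, f (g * h, j) + f (g, h) = f (h, j) + f (g, h * j)) (g : G) :
    f (1, g) = f (1, 1) := by
  have := hf 1 1 g
  simp only [one_mul] at this
  grind

/-- The abelian group structure `(x, g) + (y, h) = (x + y + f (g, h), g * h)` attached to a symmetric
2-cocycle. As `f` need not be normalized, the neutral element is `(-f (1, 1), 1)`. -/
abbrev CocycleExt.addCommGroup
    (hf : ∀ g h j, f (g * h, j) + f (g, h) = f (h, j) + f (g, h * j))
    (hs : ∀ g h, f (g, h) = f (h, g)) : AddCommGroup (CocycleExt f) :=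
  letI : Add (CocycleExt f) := ⟨fun x y => ⟨x.fst + y.fst + f (x.snd, y.snd), x.snd * y.snd⟩⟩
  letI : Zero (CocycleExt f) := ⟨⟨-f (1, 1), 1⟩⟩
  letI : Neg (CocycleExt f) := ⟨fun x => ⟨-x.fst - f (x.snd⁻¹, x.snd) - f (1, 1), x.snd⁻¹⟩⟩
  have hcomm : ∀ x y : CocycleExt f, x + y = y + x := fun x y =>
    CocycleExt.ext
      (show x.fst + y.fst + f (x.snd, y.snd) = y.fst + x.fst + f (y.snd, x.snd) by
        rw [hs, add_comm x.fst])
      (mul_comm x.snd y.snd)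
  have hzero : ∀ x : CocycleExt f, 0 + x = x := fun x =>
    CocycleExt.ext
      (show -f (1, 1) + x.fst + f (1, x.snd) = x.fst by
        rw [map_one_left hf x.snd]
        abel)
      (one_mul x.snd)
  { add_assoc := fun x y z => CocycleExt.ext
      (show x.fst + y.fst + f (x.snd, y.snd) + z.fst + f (x.snd * y.snd, z.snd) =
          x.fst + (y.fst + z.fst + f (y.snd, z.snd)) + f (x.snd, y.snd * z.snd) by
        have := hf x.snd y.snd z.snd
        grind)
      (mul_assoc x.snd y.snd z.snd)
    zero_add := hzero
    add_zero := fun x => by rw [hcomm, hzero]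
    add_comm := hcomm
    nsmul := nsmulRec
    zsmul := zsmulRec
    neg_add_cancel := fun x => CocycleExt.ext
      (show -x.fst - f (x.snd⁻¹, x.snd) - f (1, 1) + x.fst + f (x.snd⁻¹, x.snd) = -f (1, 1) by
        abel)
      (inv_mul_cancel x.snd) }

/-- A symmetric 2-cocycle with values in a divisible group is a coboundary: a retraction of the
corresponding abelian extension onto `A`, restricted to the section `g ↦ (0, g)`, is a
1-cochain with coboundary `f`. -/
lemma exists_eq_coboundary_of_symmetric [DivisibleBy A ℤ]
    (hf : ∀ g h j, f (g * h, j) + f (g, h) = f (h, j) + f (g, h * j))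
    (hs : ∀ g h, f (g, h) = f (h, g)) :
    ∃ x : G → A, ∀ g h, f (g, h) = x h - x (g * h) + x g := by
  let := CocycleExt.addCommGroup hf hs
  have add_def : ∀ x y : CocycleExt f,
      x + y = ⟨x.fst + y.fst + f (x.snd, y.snd), x.snd * y.snd⟩ := fun _ _ => rfl
  let i : A →+ CocycleExt f := AddMonoidHom.mk' (fun a => ⟨a - f (1, 1), 1⟩) fun a b => by
    rw [add_def]
    ext
    · dsimp only
      abel
    · simp
  have hi : Function.Injective i := fun a b hab =>
    sub_left_injective (congrArg CocycleExt.fst hab)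
  obtain ⟨r, hr⟩ := (Module.Baer.of_divisible A).extension_property i.toIntLinearMap hi
    LinearMap.id
  have hr' : ∀ a, r (i a) = a := fun a => LinearMap.congr_fun hr a
  refine ⟨fun g => r ⟨0, g⟩, fun g h => ?_⟩
  have hsum : (⟨0, g⟩ + ⟨0, h⟩ : CocycleExt f) = i (f (g, h)) + ⟨0, g * h⟩ := by
    rw [add_def, add_def]
    ext
    · change 0 + 0 + f (g, h) = f (g, h) - f (1, 1) + 0 + f (1, g * h)
      rw [map_one_left hf (g * h)]
      abel
    · exact (one_mul _).symm
  have := congrArg r hsum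
  rw [map_add, map_add, hr'] at this
  grind

end Extension

/-- The multiplicative group of the complex numbers is divisible. -/
noncomputable instance : DivisibleBy (Additive ℂˣ) ℤ :=
  letI : DivisibleBy (Additive ℂˣ) ℕ := divisibleByOfSMulRightSurj _ _ fun {n} hn z => by
    obtain ⟨w, hw⟩ := IsAlgClosed.exists_pow_nat_eq ((z.toMul : ℂˣ) : ℂ) (Nat.pos_of_ne_zero hn)
    have hw0 : w ≠ 0 := by
      rintro rfl
      rw [zero_pow hn] at hw
      exact z.toMul.ne_zero hw.symm
    refine ⟨Additive.ofMul (Units.mk0 w hw0), ?_⟩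
    apply Additive.toMul.injective
    ext
    simpa using hw
  AddGroup.divisibleByIntOfDivisibleByNat _

/-- The trivial representation of `ℤ/p × ℤ/p` on `ℂˣ`. -/
noncomputable abbrev triv (p : ℕ) :=
  Rep.trivial ℤ (Multiplicative (ZMod p × ZMod p)) (Additive ℂˣ)

open groupCohomology

lemma mem_cocycles_iff {p : ℕ}
    (f : Multiplicative (ZMod p × ZMod p) × Multiplicative (ZMod p × ZMod p) → Additive ℂˣ) :
    f ∈ cocycles₂ (triv p) ↔
      ∀ g h j, f (g * h, j) + f (g, h) = f (h, j) + f (g, h * j) :=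
  mem_cocycles₂_iff (A := triv p) f

/-- The commutator pairing of a 2-cocycle evaluated at the standard generators `(1, 0)`, `(0, 1)`. -/
noncomputable def pairing (p : ℕ) : cocycles₂ (triv p) →ₗ[ℤ] Additive ℂˣ where
  toFun f := (f.1 (.ofAdd (1, 0), .ofAdd (0, 1)) : Additive ℂˣ) -
    (f.1 (.ofAdd (0, 1), .ofAdd (1, 0)) : Additive ℂˣ)
  map_add' _ _ := add_sub_add_comm _ _ _ _
  map_smul' n _ := (smul_sub (A := Additive ℂˣ) n _ _).symm

lemma ker_pairing (p : ℕ) [NeZero p] (f : cocycles₂ (triv p)) :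
    pairing p f = 0 ↔ f.1 ∈ coboundaries₂ (triv p) := by
  constructor
  · intro h
    have hf := (mem_cocycles_iff f.1).1 f.2
    have hs := symmetric_of_generators hf (a := .ofAdd (1, 0)) (b := .ofAdd (0, 1)) (fun g => by
      refine ⟨g.toAdd.1.val, g.toAdd.2.val, ?_⟩
      apply Multiplicative.toAdd.injective
      ext <;> simp) h
    obtain ⟨x, hx⟩ := exists_eq_coboundary_of_symmetric hf hs
    exact ⟨x, funext fun g => (hx g.1 g.2).symm⟩
  · rintro ⟨x, hx⟩
    have hx' : ∀ g h, f.1 (g, h) = x h - x (g * h) + x g := fun g h => (congrFun hx (g, h)).symm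
    change (f.1 _ - f.1 _ : Additive ℂˣ) = 0
    rw [hx', hx', mul_comm (Multiplicative.ofAdd ((0, 1) : ZMod p × ZMod p))]
    abel

lemma mem_range_pairing (p : ℕ) (z : Additive ℂˣ) :
    z ∈ LinearMap.range (pairing p) ↔ p • z = 0 := by
  constructor
  · rintro ⟨f, rfl⟩
    have hf := (mem_cocycles_iff f.1).1 f.2
    have h := pairing_pow_left hf (.ofAdd (1, 0)) (.ofAdd (0, 1)) p
    have h0 := pairing_pow_left hf (.ofAdd (1, 0)) (.ofAdd (0, 1)) 0
    have hp : (Multiplicative.ofAdd ((1, 0) : ZMod p × ZMod p)) ^ p = 1 := by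
      apply Multiplicative.toAdd.injective
      ext <;> simp
    rw [hp] at h
    rw [pow_zero, zero_nsmul] at h0
    exact h.symm.trans h0
  · intro hz
    let φ : ZMod p →+ Additive ℂˣ := ZMod.lift p ⟨zmultiplesHom _ z, by simpa using hz⟩
    have hφ : φ 1 = z := by
      have := ZMod.lift_coe p ⟨zmultiplesHom (Additive ℂˣ) z, by simpa using hz⟩ 1
      simpa using this
    refine ⟨⟨fun g => φ (g.1.toAdd.1 * g.2.toAdd.2), (mem_cocycles_iff _).2 fun g h j => ?_⟩, ?_⟩
    · simp only [toAdd_mul, Prod.fst_add, Prod.snd_add, add_mul, mul_add, map_add]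
      abel
    · change φ (1 * 1) - φ (0 * 0) = z
      simp [hφ]

lemma card_range_pairing (p : ℕ) [NeZero p] : Nat.card (LinearMap.range (pairing p)) = p := by
  refine (Nat.card_congr (Equiv.subtypeEquiv Additive.toMul fun z => ?_)).trans
    (Complex.card_rootsOfUnity p)
  rw [mem_range_pairing, mem_rootsOfUnity]
  exact Iff.rfl

lemma card_eq_card_range {R Z H B : Type*} [Ring R] [AddCommGroup Z] [AddCommGroup H]
    [AddCommGroup B] [Module R Z] [Module R H] [Module R B] (π : Z →ₗ[R] H) (φ : Z →ₗ[R] B)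
    (hπ : Function.Surjective π) (hker : ∀ z, π z = 0 ↔ φ z = 0) :
    Nat.card H = Nat.card (LinearMap.range φ) :=
  Nat.card_congr ((π.quotKerEquivOfSurjective hπ).symm.trans
    ((Submodule.quotEquivOfEq _ _ (Submodule.ext hker)).trans φ.quotKerEquivRange)).toEquiv

end CardH2

open CardH2 groupCohomology in
/-- For every prime `p`, the second group cohomology of `ℤ/p × ℤ/p` with coefficients in
the trivial module `ℂˣ` has exactly `p` elements. -/
theorem card_H2_zmod_p_sq_units_complex (p : ℕ) (hp : p.Prime) :
    Nat.card
      (groupCohomology.H2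
        (Rep.trivial ℤ (Multiplicative (ZMod p × ZMod p)) (Additive ℂˣ))) = p := by
  have : NeZero p := ⟨hp.ne_zero⟩
  have hsurj : Function.Surjective (H2π (triv p)).hom :=
    (ModuleCat.epi_iff_surjective _).1 inferInstance
  have hker (f : cocycles₂ (triv p)) : (H2π (triv p)).hom f = 0 ↔ pairing p f = 0 :=
    (H2π_eq_zero_iff (A := triv p) f).trans (ker_pairing p f).symm
  exact (card_eq_card_range (H2π (triv p)).hom (pairing p) hsurj hker).trans
    (card_range_pairing p)
end

section
/- No root of the polynomial x³ − x² − 5x + 1 lies in a cyclotomic field: for every complex root of unity ξ (ξⁿ = 1 for some integer n ≥ 1) and every element α of the subfield ℚ(ξ) of ℂ, one has α³ − α² − 5α + 1 ≠ 0. (This polynomial is the minimal polynomial of the Frobenius–Perron dimension d₊(X) of the fusion ring with basis 1, X, Y and relations XY = 2X + Y, X² = 1 + 2Y, Y² = 1 + X + 2Y, whose Galois group is S₃; hence that fusion ring is not realizable by a fusion category.) -/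
/-!
A cyclotomic field is abelian over `ℚ`, so each of its subfields is Galois over `ℚ`. A root `α` of
the irreducible cubic `x³ - x² - 5x + 1` in such a field would generate a Galois extension `ℚ(α)`
of degree 3, which therefore contains a second root `β`, and then all three. The product of the
differences of the roots is then an element of `ℚ(α)` whose square is the discriminant
`592 = 2⁴ · 37`. As 592 is not a rational square, that element has degree 2 over `ℚ`,
and 2 does not divide 3.
-/

open Polynomial IntermediateField

/-- A rational root would be an integer dividing the constant term, i.e. `±1`. -/
lemma cubic_irreducible : Irreducible (X ^ 3 - X ^ 2 - 5 * X + 1 : ℚ[X]) := by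
  have hdeg : (X ^ 3 - X ^ 2 - 5 * X + 1 : ℚ[X]).natDegree = 3 := by
    compute_degree!
  rw [irreducible_iff_roots_eq_zero_of_degree_le_three (by omega) (by omega)]
  refine Multiset.eq_zero_of_forall_notMem fun q hq => ?_
  have hq : q ^ 3 - q ^ 2 - 5 * q + 1 = 0 := by
    simpa using (isRoot_of_mem_roots hq)
  have hint : IsIntegral ℤ q := by
    refine ⟨X ^ 3 - X ^ 2 - 5 * X + 1, by monicity!, ?_⟩
    simpa using hq
  obtain ⟨z, rfl⟩ := IsIntegrallyClosed.isIntegral_iff.mp hint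
  have hz : z ^ 3 - z ^ 2 - 5 * z + 1 = 0 := by
    have : ((z : ℤ) : ℚ) ^ 3 - z ^ 2 - 5 * z + 1 = 0 := by simpa using hq
    exact_mod_cast this
  have hunit : IsUnit z := IsUnit.of_mul_eq_one (5 + z - z ^ 2) (by linear_combination -hz)
  rcases Int.isUnit_iff.mp hunit with rfl | rfl <;> norm_num at hz

/-- The polynomial `x² - 592` has no rational root, since `24² < 592 < 25²`. -/
lemma rat_sq_ne_disc (q : ℚ) : q ^ 2 ≠ 592 := by
  intro hq
  have hsq : IsSquare (592 : ℚ) := ⟨q, by rw [← hq, sq]⟩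
  have hsq' : IsSquare (592 : ℕ) := by
    rw [← Rat.isSquare_natCast_iff]
    exact_mod_cast hsq
  obtain ⟨r, hr⟩ := hsq'
  have h1 : r < 25 := by nlinarith
  have h2 : 24 < r := by nlinarith
  omega

/-- The product of the differences of the roots `a`, `b`, `1 - a - b` of the cubic squares to the
discriminant. -/
lemma disc_eq {K : Type*} [Field K] {a b : K} (hab : b ≠ a)
    (ha : a ^ 3 - a ^ 2 - 5 * a + 1 = 0) (hb : b ^ 3 - b ^ 2 - 5 * b + 1 = 0) :
    ((a - b) * (b - (1 - a - b)) * ((1 - a - b) - a)) ^ 2 = 592 := by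
  have hr : b ^ 2 + a * b + a ^ 2 - a - b - 5 = 0 := by
    apply mul_left_cancel₀ (sub_ne_zero.mpr hab)
    linear_combination hb - ha
  clear hab hb
  grind

/-- The degree argument, over any base field in which the cubic is irreducible and its discriminant
is not a square. -/
lemma cubic_ne_zero_of_isAbelianGalois {F L : Type*} [Field F] [Field L] [Algebra F L]
    [IsAbelianGalois F L] (hcubic : Irreducible (X ^ 3 - X ^ 2 - 5 * X + 1 : F[X]))
    (hdisc : ∀ q : F, q ^ 2 ≠ 592) (a : L) : a ^ 3 - a ^ 2 - 5 * a + 1 ≠ 0 := by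
  intro ha
  have hmonic : (X ^ 3 - X ^ 2 - 5 * X + 1 : F[X]).Monic := by monicity!
  have hmin : X ^ 3 - X ^ 2 - 5 * X + 1 = minpoly F a :=
    minpoly.eq_of_irreducible_of_monic hcubic (by simpa [map_ofNat] using ha) hmonic
  have haint : IsIntegral F a := Algebra.IsIntegral.isIntegral a
  have hrank : Module.finrank F F⟮a⟯ = 3 := by
    rw [adjoin.finrank haint, ← hmin]
    compute_degree!
  have : FiniteDimensional F F⟮a⟯ := adjoin.finiteDimensional haint
  have : Nontrivial Gal(F⟮a⟯/F) := by
    rw [← Finite.one_lt_card_iff_nontrivial, IsGalois.card_aut_eq_finrank, hrank]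
    norm_num
  obtain ⟨σ, hσ⟩ := exists_ne (1 : Gal(F⟮a⟯/F))
  set x : F⟮a⟯ := AdjoinSimple.gen F a with hx
  have hσx : σ x ≠ x := by
    intro h
    apply hσ
    have hhom : (σ : F⟮a⟯ →ₐ[F] F⟮a⟯) = AlgHom.id F F⟮a⟯ :=
      adjoin_algHom_ext F (by rintro y rfl; exact h)
    ext y
    exact congrArg Subtype.val (DFunLike.congr_fun hhom y)
  have hx0 : x ^ 3 - x ^ 2 - 5 * x + 1 = 0 := by
    apply Subtype.ext
    exact ha
  have hσx0 : (σ x) ^ 3 - (σ x) ^ 2 - 5 * σ x + 1 = 0 := by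
    simpa [map_ofNat] using congrArg σ hx0
  obtain ⟨d, hd⟩ : ∃ d : F⟮a⟯, d ^ 2 = 592 := ⟨_, disc_eq hσx hx0 hσx0⟩
  have hdeg : (X ^ 2 - 592 : F[X]).natDegree = 2 := by compute_degree!
  have hirr : Irreducible (X ^ 2 - 592 : F[X]) := by
    rw [irreducible_iff_roots_eq_zero_of_degree_le_three (by omega) (by omega)]
    refine Multiset.eq_zero_of_forall_notMem fun q hq => hdisc q ?_
    simpa [sub_eq_zero] using (isRoot_of_mem_roots hq)
  have hmind : X ^ 2 - 592 = minpoly F d :=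
    minpoly.eq_of_irreducible_of_monic hirr (by simp [hd, map_ofNat]) (by monicity!)
  have hdvd := minpoly.degree_dvd (Algebra.IsIntegral.isIntegral (R := F) d)
  rw [← hmind, hdeg, hrank] at hdvd
  omega


lemma isAbelianGalois_adjoin_primitiveRoot {F E : Type*} [Field F] [Field E] [Algebra F E]
    {n : ℕ} [NeZero n] {ζ : E} (hζ : IsPrimitiveRoot ζ n) : IsAbelianGalois F F⟮ζ⟯ := by
  have hint : IsIntegral F ζ := (hζ.isIntegral (NeZero.pos n)).tower_top
  have : IsCyclotomicExtension {n} F F⟮ζ⟯ := by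
    change IsCyclotomicExtension {n} F F⟮ζ⟯.toSubalgebra
    rw [adjoin_simple_toSubalgebra_of_isAlgebraic hint.isAlgebraic]
    exact hζ.adjoin_isCyclotomicExtension F
  exact IsCyclotomicExtension.isAbelianGalois {n} F F⟮ζ⟯

/-- No root of `x³ - x² - 5x + 1` lies in a cyclotomic field: for every root of unity
`ξ ∈ ℂ` and every `α ∈ ℚ(ξ)`, one has `α³ - α² - 5α + 1 ≠ 0`. (This cubic is the
minimal polynomial of the Frobenius–Perron dimension of a basis element of a fusion
ring whose Galois group is `S₃`; hence that fusion ring is not realizable.) -/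
theorem cubic_root_not_in_cyclotomic (ξ : ℂ) (hξ : ∃ n : ℕ, 1 ≤ n ∧ ξ ^ n = 1)
    (α : ℂ) (hα : α ∈ Algebra.adjoin ℚ ({ξ} : Set ℂ)) :
    α ^ 3 - α ^ 2 - 5 * α + 1 ≠ 0 := by
  obtain ⟨n, hn, hξn⟩ := hξ
  have hpos : 0 < orderOf ξ := orderOf_pos_iff.mpr (isOfFinOrder_iff_pow_eq_one.mpr ⟨n, hn, hξn⟩)
  have : NeZero (orderOf ξ) := NeZero.of_pos hpos
  -- The type is left to unification: the algebra structure on `ℚ⟮ξ⟯` has to be the one of an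
  -- intermediate field, whereas instance search finds the one of a field of characteristic zero.
  have hab := isAbelianGalois_adjoin_primitiveRoot (F := ℚ) (IsPrimitiveRoot.orderOf ξ)
  have hα' : α ∈ ℚ⟮ξ⟯ := algebra_adjoin_le_adjoin ℚ {ξ} hα
  intro h
  exact @cubic_ne_zero_of_isAbelianGalois _ _ _ _ _ hab cubic_irreducible rat_sq_ne_disc
    ⟨α, hα'⟩ (Subtype.ext h)
end

section
/- (Landau's theorem) For every natural number N there exists a bound B(N) such that every finite group having at most N conjugacy classes (equivalently, at most N isomorphism classes of irreducible complex representations) has order at most B(N); in particular, up to isomorphism there are only finitely many finite groups with at most N irreducible representations. -/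
/-!
Dividing the class equation `∑ |C| = |G|` by `|G|` writes `1` as the sum, over the conjugacy
classes `C`, of the unit fractions `1 / (|G| / |C|)`, whose denominators are the centralizer orders.
The class of the identity contributes the denominator `|G|`. So it is enough to know that for a
fixed rational `q` the denominators of the representations of `q` as a sum of at most `k` unit
fractions are bounded (`exists_bound_of_sum_inv_eq`). This goes by induction on `k`: some
denominator `y` is at most `k / q`, which leaves finitely many choices for `y`, and the other
denominators represent `q - 1 / y` with at most `k - 1` terms.
-/

theorem exists_bound_of_sum_inv_eq (k : ℕ) : ∀ q : ℚ, ∃ B : ℕ, ∀ s : Multiset ℕ,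
    s.card ≤ k → (∀ x ∈ s, 0 < x) → (s.map fun x : ℕ => (x : ℚ)⁻¹).sum = q →
      ∀ x ∈ s, x ≤ B := by
  induction k with
  | zero =>
    intro q
    refine ⟨0, fun s hs _ _ x hx => ?_⟩
    have : s = 0 := by simpa using hs
    simp [this] at hx
  | succ k ih =>
    intro q
    choose B hB using ih
    set M : ℕ := ⌊(k + 1 : ℚ) / q⌋₊ with hM
    refine ⟨max M ((Finset.range (M + 1)).sup fun y => B (q - (y : ℚ)⁻¹)), ?_⟩
    intro s hs hpos hsum x hx
    have hq : 0 < q := by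
      obtain ⟨t, rfl⟩ := Multiset.exists_cons_of_mem hx
      rw [← hsum, Multiset.map_cons, Multiset.sum_cons]
      have h1 : (0 : ℚ) < (x : ℚ)⁻¹ := by
        have := hpos x hx
        positivity
      have h2 : 0 ≤ (t.map fun x : ℕ => (x : ℚ)⁻¹).sum := by
        apply Multiset.sum_nonneg
        intro a ha
        obtain ⟨b, -, rfl⟩ := Multiset.mem_map.1 ha
        positivity
      linarith
    -- The largest of at most `k + 1` terms with sum `q` is at least `q / (k + 1)`.
    obtain ⟨y, hy, hyM⟩ : ∃ y ∈ s, y ≤ M := by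
      by_contra! hcon
      have hlt : ∀ y ∈ s, (y : ℚ)⁻¹ < q / (k + 1) := by
        intro y hy
        have h1 : (k + 1 : ℚ) / q < y := Nat.lt_of_floor_lt (hcon y hy)
        have h2 : (0 : ℚ) < (k + 1 : ℚ) / q := by positivity
        calc (y : ℚ)⁻¹ < ((k + 1 : ℚ) / q)⁻¹ := inv_strictAnti₀ h2 h1
          _ = q / (k + 1) := inv_div _ _
      have h3 : (s.map fun x : ℕ => (x : ℚ)⁻¹).sum < (s.map fun _ : ℕ => q / (k + 1)).sum :=
        Multiset.sum_lt_sum_of_nonempty (by rintro rfl; simp at hx) hlt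
      rw [hsum, Multiset.map_const', Multiset.sum_replicate, nsmul_eq_mul] at h3
      have h4 : (s.card : ℚ) ≤ k + 1 := by exact_mod_cast hs
      have h5 : (s.card : ℚ) * (q / (k + 1)) ≤ (k + 1) * (q / (k + 1)) := by gcongr
      rw [mul_div_cancel₀ _ (by positivity)] at h5
      linarith
    obtain ⟨t, rfl⟩ := Multiset.exists_cons_of_mem hy
    rcases Multiset.mem_cons.1 hx with rfl | hxt
    · exact le_max_of_le_left hyM
    · refine le_max_of_le_right ?_
      have hle : x ≤ B (q - (y : ℚ)⁻¹) := by
        refine hB _ t (by simpa using hs) (fun z hz => hpos z (Multiset.mem_cons_of_mem hz)) ?_ x hxt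
        rw [← hsum, Multiset.map_cons, Multiset.sum_cons]
        ring
      exact hle.trans (Finset.le_sup (f := fun y : ℕ => B (q - (y : ℚ)⁻¹))
        (Finset.mem_range.2 (Nat.lt_succ_of_le hyM)))

/-- Orbit–stabilizer for the conjugation action. -/
theorem natCard_carrier_dvd {G : Type*} [Group G] [Finite G] (c : ConjClasses G) :
    Nat.card c.carrier ∣ Nat.card G := by
  classical
  obtain ⟨g, rfl⟩ := ConjClasses.exists_rep c
  have := Fintype.ofFinite G
  have h := MulAction.card_orbit_mul_card_stabilizer_eq_card_group (ConjAct G) g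
  rw [Nat.card_congr (Equiv.setCongr (ConjAct.orbit_eq_carrier_conjClasses g).symm)]
  refine ⟨Nat.card (MulAction.stabilizer (ConjAct G) g), ?_⟩
  simp only [Nat.card_eq_fintype_card]
  rw [h, ConjAct.card]

/-- (Landau's theorem) For every `N` there is a bound `B` such that every finite group
with at most `N` conjugacy classes (equivalently, at most `N` isomorphism classes of
irreducible complex representations) has order at most `B`; in particular there are only
finitely many such groups up to isomorphism. -/
theorem landau_bound_of_card_conjClasses (N : ℕ) :
    ∃ B : ℕ, ∀ (G : Type) (_ : Group G) (_ : Finite G),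
      Nat.card (ConjClasses G) ≤ N → Nat.card G ≤ B := by
  classical
  obtain ⟨B, hB⟩ := exists_bound_of_sum_inv_eq N 1
  refine ⟨B, fun G _ _ hN => ?_⟩
  have := Fintype.ofFinite (ConjClasses G)
  have hG : (Nat.card G : ℚ) ≠ 0 := by exact_mod_cast Nat.card_pos.ne'
  have hpos : ∀ c : ConjClasses G, 0 < Nat.card c.carrier := fun c => by
    obtain ⟨g, rfl⟩ := ConjClasses.exists_rep c
    have : Nonempty (ConjClasses.mk g).carrier := ⟨⟨g, ConjClasses.mem_carrier_mk⟩⟩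
    exact Nat.card_pos
  refine hB ((Finset.univ : Finset (ConjClasses G)).val.map
    fun c => Nat.card G / Nat.card c.carrier) ?_ ?_ ?_ _ ?_
  · simpa [Nat.card_eq_fintype_card] using hN
  · intro x hx
    obtain ⟨c, -, rfl⟩ := Multiset.mem_map.1 hx
    exact Nat.div_pos (Nat.le_of_dvd Nat.card_pos (natCard_carrier_dvd c)) (hpos c)
  · rw [Multiset.map_map]
    change ∑ c : ConjClasses G, ((Nat.card G / Nat.card c.carrier : ℕ) : ℚ)⁻¹ = 1
    have hterm : ∀ c : ConjClasses G, ((Nat.card G / Nat.card c.carrier : ℕ) : ℚ)⁻¹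
        = (Nat.card c.carrier : ℚ) / Nat.card G := fun c => by
      rw [Nat.cast_div (natCard_carrier_dvd c) (by exact_mod_cast (hpos c).ne'), inv_div]
    simp_rw [hterm]
    rw [← Finset.sum_div, div_eq_one_iff_eq hG, ← Group.sum_card_conj_classes_eq_card G,
      finsum_eq_sum_of_fintype]
    simp [Nat.card_coe_set_eq]
  · -- The class of the identity is a singleton, so its denominator is `|G|`.
    refine Multiset.mem_map.2 ⟨ConjClasses.mk 1, Finset.mem_univ_val _, ?_⟩
    have : (ConjClasses.mk (1 : G)).carrier = {1} := by
      ext x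
      simp [ConjClasses.mem_carrier_iff_mk_eq, ConjClasses.mk_eq_mk_iff_isConj]
    simp [this]
end
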